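/- arXiv:1201.0713 — 3 statements merged into one kernel-verified Lean document; each statement's English description precedes it below -/
import Mathlib

section
/- There exists a constant B > 0 such that for all real X ≥ 1, | Σ_{n ≤ X} τ(n)/√n − √X·(2 log X + 4C − 4) | ≤ B, where C is the Euler–Mascheroni constant. -/
/-!
Since `n ↦ 1 / √n` is completely multiplicative, `τ(n) / √n` is its Dirichlet convolution square, so
Dirichlet's hyperbola method with `M = ⌊√X⌋` and `A(x) = ∑_{k ≤ x} 1 / √k` gives
`∑_{n ≤ X} τ(n) / √n = 2 ∑_{a ≤ M} A(X / a) / √a - A(M) ^ 2`.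
Inserting `A(x) = 2 √x + c + O(1 / √x)` into the first sum turns it into `2 √X H_M + c A(M) + O(1)`.
As `2 c A(M) - A(M) ^ 2 = c ^ 2 - (A(M) - c) ^ 2` and `(A(M) - c) ^ 2 = 4 √X + O(1)`, the constant
`c` disappears from the main term, and `H_M = log √X + γ + O(1 / √X)` finishes the computation.
-/

open Finset
open ArithmeticFunction (sum_Ioc_mul_eq_sum_prod_filter)

section Hyperbola

variable {R : Type*}

theorem sum_mul_le_and_fst_le [AddCommMonoid R] (F : ℕ → ℕ → R) (N K : ℕ) :
    ∑ x ∈ Ioc 0 N ×ˢ Ioc 0 N with x.1 * x.2 ≤ N ∧ x.1 ≤ K, F x.1 x.2 =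
      ∑ a ∈ Ioc 0 K, ∑ b ∈ Ioc 0 (N / a), F a b := by
  refine sum_finset_product _ _ _ fun ⟨a, b⟩ ↦ ?_
  simp only [mem_filter, mem_product, mem_Ioc]
  constructor
  · rintro ⟨⟨⟨ha, -⟩, hb, -⟩, hab, haK⟩
    exact ⟨⟨ha, haK⟩, hb, by rwa [Nat.le_div_iff_mul_le ha, mul_comm]⟩
  · rintro ⟨⟨ha, haK⟩, hb, hab⟩
    rw [Nat.le_div_iff_mul_le ha, mul_comm] at hab
    exact ⟨⟨⟨ha, (Nat.le_mul_of_pos_right a hb).trans hab⟩,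
      hb, (Nat.le_mul_of_pos_left b ha).trans hab⟩, hab, haK⟩

theorem sum_mul_le_and_snd_le [AddCommMonoid R] (F : ℕ → ℕ → R) (N M : ℕ) :
    ∑ x ∈ Ioc 0 N ×ˢ Ioc 0 N with x.1 * x.2 ≤ N ∧ x.2 ≤ M, F x.1 x.2 =
      ∑ b ∈ Ioc 0 M, ∑ a ∈ Ioc 0 (N / b), F a b := by
  rw [← sum_mul_le_and_fst_le fun b a ↦ F a b]
  refine sum_equiv (Equiv.prodComm ℕ ℕ) (fun x ↦ ?_) fun _ _ ↦ rfl
  simp only [mem_filter, mem_product, Equiv.prodComm_apply, Prod.fst_swap, Prod.snd_swap,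
    mul_comm x.2, and_comm (a := x.2 ∈ _)]

theorem filter_mul_le_and_fst_le_inter_filter_mul_le_and_snd_le {N K M : ℕ} (hKM : K * M ≤ N) :
    {x ∈ Ioc 0 N ×ˢ Ioc 0 N | x.1 * x.2 ≤ N ∧ x.1 ≤ K} ∩
        {x ∈ Ioc 0 N ×ˢ Ioc 0 N | x.1 * x.2 ≤ N ∧ x.2 ≤ M} = Ioc 0 K ×ˢ Ioc 0 M := by
  ext ⟨a, b⟩
  simp only [mem_inter, mem_filter, mem_product, mem_Ioc]
  constructor
  · rintro ⟨⟨⟨⟨ha, -⟩, hb, -⟩, -, haK⟩, -, -, hbM⟩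
    exact ⟨⟨ha, haK⟩, hb, hbM⟩
  · rintro ⟨⟨ha, haK⟩, hb, hbM⟩
    have hab : a * b ≤ N := (Nat.mul_le_mul haK hbM).trans hKM
    have haN : a ≤ N := (Nat.le_mul_of_pos_right a hb).trans hab
    have hbN : b ≤ N := (Nat.le_mul_of_pos_left b ha).trans hab
    exact ⟨⟨⟨⟨ha, haN⟩, hb, hbN⟩, hab, haK⟩, ⟨⟨ha, haN⟩, hb, hbN⟩, hab, hbM⟩

theorem filter_mul_le_eq_union {N K M : ℕ} (hN : N < (K + 1) * (M + 1)) (s : Finset (ℕ × ℕ)) :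
    {x ∈ s | x.1 * x.2 ≤ N} =
      {x ∈ s | x.1 * x.2 ≤ N ∧ x.1 ≤ K} ∪ {x ∈ s | x.1 * x.2 ≤ N ∧ x.2 ≤ M} := by
  rw [← filter_or]
  refine filter_congr fun x _ ↦ ?_
  rw [← and_or_left, iff_self_and]
  intro hx
  by_contra! hlt
  exact (hx.trans_lt hN).not_ge (Nat.mul_le_mul hlt.1 hlt.2)

theorem sum_Ioc_mul_eq_sum_add_sum_sub_mul [Ring R] (f g : ArithmeticFunction R) {N K M : ℕ}
    (hKM : K * M ≤ N) (hN : N < (K + 1) * (M + 1)) :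
    ∑ n ∈ Ioc 0 N, (f * g) n =
      ∑ a ∈ Ioc 0 K, f a * ∑ b ∈ Ioc 0 (N / a), g b +
        ∑ b ∈ Ioc 0 M, (∑ a ∈ Ioc 0 (N / b), f a) * g b -
        (∑ a ∈ Ioc 0 K, f a) * ∑ b ∈ Ioc 0 M, g b := by
  have hfst := sum_mul_le_and_fst_le (fun a b ↦ f a * g b) N K
  have hsnd := sum_mul_le_and_snd_le (fun a b ↦ f a * g b) N M
  have hboth : ∑ x ∈ Ioc 0 K ×ˢ Ioc 0 M, f x.1 * g x.2 =
      (∑ a ∈ Ioc 0 K, f a) * ∑ b ∈ Ioc 0 M, g b := by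
    rw [sum_mul_sum, sum_product]
  simp only [← mul_sum] at hfst
  simp only [← sum_mul] at hsnd
  rw [eq_sub_iff_add_eq, ← hfst, ← hsnd, ← hboth,
    ← filter_mul_le_and_fst_le_inter_filter_mul_le_and_snd_le hKM, ← sum_union_inter,
    ← filter_mul_le_eq_union hN, sum_Ioc_mul_eq_sum_prod_filter]

theorem sum_Ioc_mul_self_eq_two_mul_sum_sub_sq [CommRing R] (f : ArithmeticFunction R) (N : ℕ) :
    ∑ n ∈ Ioc 0 N, (f * f) n =
      2 * ∑ a ∈ Ioc 0 N.sqrt, f a * ∑ b ∈ Ioc 0 (N / a), f b -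
        (∑ a ∈ Ioc 0 N.sqrt, f a) ^ 2 := by
  rw [sum_Ioc_mul_eq_sum_add_sum_sub_mul f f N.sqrt_le N.lt_succ_sqrt]
  simp only [mul_comm _ (f _)]
  ring

theorem mul_self_apply_of_map_mul [Semiring R] {f : ArithmeticFunction R}
    (hf : ∀ a b, f (a * b) = f a * f b) (n : ℕ) : (f * f) n = #n.divisors * f n := by
  calc (f * f) n
      = ∑ _x ∈ n.divisorsAntidiagonal, f n := by
        rw [ArithmeticFunction.mul_apply]
        refine sum_congr rfl fun x hx ↦ ?_
        rw [← hf, (Nat.mem_divisorsAntidiagonal.1 hx).1]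
    _ = #n.divisors * f n := by
        rw [sum_const, nsmul_eq_mul, ← Nat.map_div_right_divisors, card_map]

end Hyperbola

section SumInvSqrt

/-- The arithmetic function `n ↦ 1 / √n`; it vanishes at `0` because `1 / 0 = 0`. -/
noncomputable def invSqrt : ArithmeticFunction ℝ := ⟨fun n ↦ (√n)⁻¹, by simp⟩

theorem invSqrt_apply (n : ℕ) : invSqrt n = (√n)⁻¹ := rfl

theorem invSqrt_mul (a b : ℕ) : invSqrt (a * b) = invSqrt a * invSqrt b := by
  simp only [invSqrt_apply, Nat.cast_mul, Real.sqrt_mul a.cast_nonneg, mul_inv]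

/-- The summatory function `A(n) = ∑_{k ≤ n} 1 / √k`. -/
noncomputable def sumInvSqrt (n : ℕ) : ℝ := ∑ k ∈ Ioc 0 n, invSqrt k

/-- The constant term `c` of `A(x) = 2 √x + c + O(1 / √x)`, which equals `ζ(1/2)`. It is encoded as
the supremum of the increasing sequence `A(n) - 2 √(n + 1)`. -/
noncomputable def sumInvSqrtConst : ℝ := ⨆ n : ℕ, (sumInvSqrt n - 2 * √(n + 1))

theorem sumInvSqrt_succ (n : ℕ) : sumInvSqrt (n + 1) = sumInvSqrt n + (√(n + 1))⁻¹ := by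
  rw [sumInvSqrt, sum_Ioc_succ_top n.zero_le, invSqrt_apply, Nat.cast_add_one, sumInvSqrt]

theorem inv_sqrt_add_one_le {x : ℝ} (hx : 0 ≤ x) : (√(x + 1))⁻¹ ≤ 2 * (√(x + 1) - √x) := by
  rw [inv_le_iff_one_le_mul₀ (by positivity)]
  nlinarith [sq_nonneg (√(x + 1) - √x), Real.sq_sqrt hx, Real.sq_sqrt (show 0 ≤ x + 1 by linarith)]

theorem two_mul_sqrt_add_one_sub_sqrt_le {x : ℝ} (hx : 0 < x) :
    2 * (√(x + 1) - √x) ≤ (√x)⁻¹ := by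
  rw [← one_div, le_div_iff₀ (by positivity)]
  nlinarith [sq_nonneg (√(x + 1) - √x), Real.sq_sqrt hx.le,
    Real.sq_sqrt (show 0 ≤ x + 1 by linarith)]

theorem monotone_sumInvSqrt_sub : Monotone fun n : ℕ ↦ sumInvSqrt n - 2 * √(n + 1) := by
  refine monotone_nat_of_le_succ fun n ↦ ?_
  have h := two_mul_sqrt_add_one_sub_sqrt_le (n.cast_add_one_pos (α := ℝ))
  rw [sumInvSqrt_succ, Nat.cast_add_one]
  linarith

theorem antitone_sumInvSqrt_sub : Antitone fun n : ℕ ↦ sumInvSqrt n - 2 * √n := by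
  refine antitone_nat_of_succ_le fun n ↦ ?_
  have h := inv_sqrt_add_one_le (n.cast_nonneg (α := ℝ))
  rw [sumInvSqrt_succ, Nat.cast_add_one]
  linarith

theorem sumInvSqrtConst_mem_Icc (n : ℕ) :
    sumInvSqrtConst ∈ Set.Icc (sumInvSqrt n - 2 * √(n + 1)) (sumInvSqrt n - 2 * √n) := by
  refine Set.mem_iInter.1 (monotone_sumInvSqrt_sub.ciSup_mem_iInter_Icc_of_antitone
    antitone_sumInvSqrt_sub fun m ↦ ?_) n
  dsimp only
  gcongr
  linarith

end SumInvSqrt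

section FloorEstimates

theorem abs_sub_sub_le_of_mem_Icc_floor {F : ℝ → ℝ} (hF : MonotoneOn F (Set.Ici 1)) {S c t : ℝ}
    (ht : 1 ≤ t) (hc : c ∈ Set.Icc (S - F (⌊t⌋₊ + 1)) (S - F ⌊t⌋₊)) :
    |S - F t - c| ≤ F (⌊t⌋₊ + 1) - F ⌊t⌋₊ := by
  have hfloor : (1 : ℝ) ≤ ⌊t⌋₊ := by exact_mod_cast Nat.floor_pos.2 ht
  have hlower : F ⌊t⌋₊ ≤ F t := hF hfloor ht (Nat.floor_le (by linarith))
  have hupper : F t ≤ F (⌊t⌋₊ + 1) :=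
    hF ht (Set.mem_Ici.2 (by linarith)) (Nat.lt_floor_add_one t).le
  rw [abs_le]
  constructor <;> linarith [hc.1, hc.2]

theorem abs_sumInvSqrt_floor_sub_le {t : ℝ} (ht : 1 ≤ t) :
    |sumInvSqrt ⌊t⌋₊ - 2 * √t - sumInvSqrtConst| ≤ 2 / √t := by
  have hmono : MonotoneOn (fun x ↦ 2 * √x) (Set.Ici 1) := fun x _ y _ hxy ↦ by
    dsimp only
    gcongr
  have hpos : 0 < √t := Real.sqrt_pos.2 (by linarith)
  have hle : √t ≤ √(⌊t⌋₊ + 1) := Real.sqrt_le_sqrt (Nat.lt_floor_add_one t).le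
  refine (abs_sub_sub_le_of_mem_Icc_floor hmono ht (sumInvSqrtConst_mem_Icc _)).trans ?_
  rw [le_div_iff₀ hpos]
  nlinarith [Real.sq_sqrt (Nat.cast_nonneg (α := ℝ) ⌊t⌋₊), Real.sqrt_nonneg (⌊t⌋₊ : ℝ),
    Real.sq_sqrt (Nat.cast_add_one_pos (α := ℝ) ⌊t⌋₊).le]

theorem abs_harmonic_floor_sub_le {t : ℝ} (ht : 1 ≤ t) :
    |(harmonic ⌊t⌋₊ : ℝ) - Real.log t - Real.eulerMascheroniConstant| ≤ 2 / t := by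
  have hmono : MonotoneOn Real.log (Set.Ici 1) :=
    Real.strictMonoOn_log.monotoneOn.mono (Set.Ici_subset_Ioi.2 one_pos)
  have hfloor : 0 < ⌊t⌋₊ := Nat.floor_pos.2 ht
  have hfloor' : (1 : ℝ) ≤ ⌊t⌋₊ := by exact_mod_cast hfloor
  have hγ_lower := (Real.eulerMascheroniSeq_lt_eulerMascheroniConstant ⌊t⌋₊).le
  have hγ_upper := (Real.eulerMascheroniConstant_lt_eulerMascheroniSeq' ⌊t⌋₊).le
  rw [Real.eulerMascheroniSeq', if_neg hfloor.ne'] at hγ_upper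
  calc |(harmonic ⌊t⌋₊ : ℝ) - Real.log t - Real.eulerMascheroniConstant|
      ≤ Real.log (⌊t⌋₊ + 1) - Real.log ⌊t⌋₊ :=
        abs_sub_sub_le_of_mem_Icc_floor hmono ht ⟨hγ_lower, hγ_upper⟩
    _ = Real.log ((⌊t⌋₊ + 1) / ⌊t⌋₊) := (Real.log_div (by positivity) (by positivity)).symm
    _ ≤ (⌊t⌋₊ + 1) / ⌊t⌋₊ - 1 := Real.log_le_sub_one_of_pos (by positivity)
    _ = 1 / ⌊t⌋₊ := by field_simp; ring
    _ ≤ 2 / t := by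
      rw [div_le_div_iff₀ (by positivity) (by positivity)]
      linarith [Nat.lt_floor_add_one t]

theorem abs_mul_harmonic_floor_sub_le {t : ℝ} (ht : 1 ≤ t) :
    |t * harmonic ⌊t⌋₊ - t * (Real.log t + Real.eulerMascheroniConstant)| ≤ 2 := by
  have ht₀ : 0 < t := by linarith
  calc |t * harmonic ⌊t⌋₊ - t * (Real.log t + Real.eulerMascheroniConstant)|
      = t * |(harmonic ⌊t⌋₊ : ℝ) - Real.log t - Real.eulerMascheroniConstant| := by
        rw [← mul_sub, abs_mul, abs_of_pos ht₀, sub_sub]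
    _ ≤ t * (2 / t) := by gcongr; exact abs_harmonic_floor_sub_le ht
    _ = 2 := mul_div_cancel₀ 2 ht₀.ne'

theorem abs_sq_sumInvSqrt_floor_sub_const_sub_le {t : ℝ} (ht : 1 ≤ t) :
    |(sumInvSqrt ⌊t⌋₊ - sumInvSqrtConst) ^ 2 - 4 * t| ≤ 12 := by
  have hsqrt : 1 ≤ √t := Real.one_le_sqrt.2 ht
  obtain ⟨e, he⟩ : ∃ e, e = sumInvSqrt ⌊t⌋₊ - 2 * √t - sumInvSqrtConst := ⟨_, rfl⟩
  have he_le : |e| ≤ 2 / √t := he ▸ abs_sumInvSqrt_floor_sub_le ht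
  have he_le_two : |e| ≤ 2 := he_le.trans (div_le_self zero_le_two hsqrt)
  have hmul : |e| * √t ≤ 2 := (le_div_iff₀ (by positivity)).1 he_le
  calc |(sumInvSqrt ⌊t⌋₊ - sumInvSqrtConst) ^ 2 - 4 * t|
      = |4 * (e * √t) + e ^ 2| := by
        rw [show sumInvSqrt ⌊t⌋₊ - sumInvSqrtConst = 2 * √t + e by rw [he]; ring]
        congr 1
        linear_combination 4 * Real.sq_sqrt (zero_le_one.trans ht)
    _ ≤ 4 * (|e| * √t) + |e| ^ 2 := by
        refine (abs_add_le _ _).trans_eq ?_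
        rw [abs_mul, abs_mul, abs_pow, abs_of_pos (by positivity : 0 < √t), abs_of_pos four_pos]
    _ ≤ 4 * 2 + 2 ^ 2 := by gcongr
    _ = 12 := by norm_num

end FloorEstimates

section WeightedSum

theorem abs_invSqrt_mul_sumInvSqrt_div_sub_le {X : ℝ} {a : ℕ} (ha : 0 < a) (haX : a ≤ X) :
    |invSqrt a * sumInvSqrt (⌊X⌋₊ / a) - (2 * √X * (a : ℝ)⁻¹ + sumInvSqrtConst * invSqrt a)| ≤
      2 / √X := by
  have ha' : (0 : ℝ) < a := by exact_mod_cast ha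
  have hX : 0 < X := ha'.trans_le haX
  have h := abs_sumInvSqrt_floor_sub_le ((one_le_div ha').2 haX)
  rw [Nat.floor_div_natCast, Real.sqrt_div hX.le] at h
  have hinv : (a : ℝ)⁻¹ = (√a)⁻¹ * (√a)⁻¹ := by rw [← mul_inv, Real.mul_self_sqrt ha'.le]
  have hfactor : invSqrt a * sumInvSqrt (⌊X⌋₊ / a) -
      (2 * √X * (a : ℝ)⁻¹ + sumInvSqrtConst * invSqrt a) =
        (√a)⁻¹ * (sumInvSqrt (⌊X⌋₊ / a) - 2 * (√X / √a) - sumInvSqrtConst) := by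
    rw [invSqrt_apply, hinv]
    ring
  calc |invSqrt a * sumInvSqrt (⌊X⌋₊ / a) - (2 * √X * (a : ℝ)⁻¹ + sumInvSqrtConst * invSqrt a)|
      = (√a)⁻¹ * |sumInvSqrt (⌊X⌋₊ / a) - 2 * (√X / √a) - sumInvSqrtConst| := by
        rw [hfactor, abs_mul, abs_of_nonneg (by positivity)]
    _ ≤ (√a)⁻¹ * (2 / (√X / √a)) := by gcongr
    _ = 2 / √X := by field_simp

theorem abs_sum_invSqrt_mul_sumInvSqrt_div_sub_le {X : ℝ} {M : ℕ} (hM : M ≤ X) :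
    |∑ a ∈ Ioc 0 M, invSqrt a * sumInvSqrt (⌊X⌋₊ / a) -
        (2 * √X * harmonic M + sumInvSqrtConst * sumInvSqrt M)| ≤ M * (2 / √X) := by
  have hsum : 2 * √X * harmonic M + sumInvSqrtConst * sumInvSqrt M =
      ∑ a ∈ Ioc 0 M, (2 * √X * (a : ℝ)⁻¹ + sumInvSqrtConst * invSqrt a) := by
    rw [sum_add_distrib, ← mul_sum, ← mul_sum, harmonic_eq_sum_Icc, sumInvSqrt,
      ← Icc_add_one_left_eq_Ioc, zero_add]
    push_cast
    rfl
  rw [hsum, ← sum_sub_distrib]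
  refine (abs_sum_le_sum_abs _ _).trans ((sum_le_card_nsmul _ _ (2 / √X) fun a ha ↦ ?_).trans_eq ?_)
  · rw [mem_Ioc] at ha
    exact abs_invSqrt_mul_sumInvSqrt_div_sub_le ha.1 ((Nat.cast_le.2 ha.2).trans hM)
  · rw [Nat.card_Ioc, tsub_zero, nsmul_eq_mul]

theorem abs_sum_invSqrt_mul_sumInvSqrt_div_floor_sqrt_sub_le {X : ℝ} (hX : 1 ≤ X) :
    |∑ a ∈ Ioc 0 ⌊√X⌋₊, invSqrt a * sumInvSqrt (⌊X⌋₊ / a) -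
        (2 * √X * harmonic ⌊√X⌋₊ + sumInvSqrtConst * sumInvSqrt ⌊√X⌋₊)| ≤ 2 := by
  have hfloor : (⌊√X⌋₊ : ℝ) ≤ √X := Nat.floor_le X.sqrt_nonneg
  refine (abs_sum_invSqrt_mul_sumInvSqrt_div_sub_le
    (hfloor.trans (Real.sqrt_le_self_iff.2 (Or.inr hX)))).trans ?_
  rw [← mul_div_assoc, div_le_iff₀ (Real.sqrt_pos.2 (by linarith))]
  linarith

theorem sqrt_floor_eq_floor_sqrt {X : ℝ} (hX : 0 ≤ X) : Nat.sqrt ⌊X⌋₊ = ⌊√X⌋₊ := by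
  symm
  rw [Nat.floor_eq_iff X.sqrt_nonneg, Real.le_sqrt (by positivity) hX,
    Real.sqrt_lt' (by positivity)]
  constructor
  · refine le_trans ?_ (Nat.floor_le hX)
    exact_mod_cast Nat.sqrt_le' _
  · refine (Nat.lt_floor_add_one X).trans_le ?_
    exact_mod_cast Nat.lt_succ_sqrt' _

theorem sum_card_divisors_div_sqrt_eq {X : ℝ} (hX : 0 ≤ X) :
    ∑ n ∈ Icc 1 ⌊X⌋₊, (#n.divisors : ℝ) / √n =
      2 * ∑ a ∈ Ioc 0 ⌊√X⌋₊, invSqrt a * sumInvSqrt (⌊X⌋₊ / a) - sumInvSqrt ⌊√X⌋₊ ^ 2 := by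
  simp only [sumInvSqrt, ← sqrt_floor_eq_floor_sqrt hX]
  rw [← sum_Ioc_mul_self_eq_two_mul_sum_sub_sq]
  simp only [mul_self_apply_of_map_mul invSqrt_mul, invSqrt_apply, div_eq_mul_inv,
    ← Icc_add_one_left_eq_Ioc, zero_add]

end WeightedSum

/-- Hyperbola-method estimate: `Σ_{n ≤ X} τ(n)/√n = √X (2 log X + 4C - 4) + O(1)`,
where `C` is the Euler–Mascheroni constant. -/
theorem stmt15 :
    ∃ B : ℝ, 0 < B ∧ ∀ X : ℝ, 1 ≤ X →
      |(∑ n ∈ Finset.Icc 1 ⌊X⌋₊, (n.divisors.card : ℝ) / Real.sqrt n) -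
          Real.sqrt X * (2 * Real.log X + 4 * Real.eulerMascheroniConstant - 4)| ≤ B := by
  refine ⟨24 + sumInvSqrtConst ^ 2, by positivity, fun X hX ↦ ?_⟩
  have hX₀ : 0 ≤ X := zero_le_one.trans hX
  have hsqrt : 1 ≤ √X := Real.one_le_sqrt.2 hX
  have hlog : Real.log X = 2 * Real.log √X := by rw [Real.log_sqrt hX₀]; ring
  have hweighted := abs_sum_invSqrt_mul_sumInvSqrt_div_floor_sqrt_sub_le hX
  have hharmonic := abs_mul_harmonic_floor_sub_le hsqrt
  have hsq := abs_sq_sumInvSqrt_floor_sub_const_sub_le hsqrt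
  rw [sum_card_divisors_div_sqrt_eq hX₀, hlog]
  rw [abs_le] at hweighted hharmonic hsq ⊢
  constructor <;> linarith [sq_nonneg sumInvSqrtConst]
end

section
/- There exists a constant B > 0 such that for all real X ≥ 1, | Σ_{n ≤ X} τ(n)/n − ((1/2)(log X)^2 + 2C·log X) | ≤ B, where C is the Euler–Mascheroni constant. -/
/-!
The Dirichlet convolution identity turns the sum into `∑_{d ≤ X} H_{⌊X/d⌋} / d`, where `H_n` is the
`n`-th harmonic number. Since `H_{⌊x⌋} = log x + C + O(1/x)`, adding the estimates at `X / d` and at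
`d` cancels `log d` and gives `H_{⌊X/d⌋} = log X + 2C - H_d + O(d/X + 1/d)`. Weighted by `1/d`, the
errors add up to `O(1)`, while `∑_{d ≤ X} H_d / d = H_{⌊X⌋}² / 2 + O(1)`. So the sum is
`(log X + 2C) H - H² / 2 + O(1)` with `H = H_{⌊X⌋}`. The derivative `log X + 2C - H` of this
quadratic is `O(1)` near `H = log X + C`, so the error `O(1/X)` in `H` is not amplified by `log X`.
-/

open Finset Real

section Divisors

theorem mul_self_apply_eq_card_divisors_mul {R : Type*} [Semiring R] {f : ArithmeticFunction R}
    (hf : ∀ m n, f (m * n) = f m * f n) (n : ℕ) :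
    (f * f) n = n.divisors.card * f n := by
  calc (f * f) n = ∑ _ ∈ n.divisorsAntidiagonal, f n := by
        rw [ArithmeticFunction.mul_apply]
        refine sum_congr rfl fun p hp => ?_
        rw [← hf, (Nat.mem_divisorsAntidiagonal.1 hp).1]
    _ = n.divisors.card * f n := by
        rw [sum_const, nsmul_eq_mul, ← Nat.map_div_right_divisors, card_map]

theorem sum_Ioc_card_divisors_mul_eq_sum_sum {R : Type*} [Semiring R] {f : ArithmeticFunction R}
    (hf : ∀ m n, f (m * n) = f m * f n) (N : ℕ) :
    ∑ n ∈ Ioc 0 N, n.divisors.card * f n =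
      ∑ d ∈ Ioc 0 N, f d * ∑ m ∈ Ioc 0 (N / d), f m := by
  simp only [← mul_self_apply_eq_card_divisors_mul hf,
    ArithmeticFunction.sum_Ioc_mul_eq_sum_sum]

end Divisors

section Harmonic

theorem cast_harmonic_eq_sum_Icc (K : Type*) [DivisionRing K] [CharZero K] (n : ℕ) :
    (harmonic n : K) = ∑ d ∈ Icc 1 n, (d : K)⁻¹ := by
  simp only [harmonic_eq_sum_Icc, Rat.cast_sum, Rat.cast_inv, Rat.cast_natCast]

theorem sum_Icc_card_divisors_div_eq_sum_inv_mul_harmonic (K : Type*) [Field K] [CharZero K]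
    (N : ℕ) :
    ∑ n ∈ Icc 1 N, (n.divisors.card : K) / n =
      ∑ d ∈ Icc 1 N, (d : K)⁻¹ * (harmonic (N / d) : K) := by
  let inv : ArithmeticFunction K := ⟨fun n => (n : K)⁻¹, by simp⟩
  have inv_mul (m n : ℕ) : inv (m * n) = inv m * inv n := by
    simp only [inv, ArithmeticFunction.coe_mk, Nat.cast_mul, mul_inv]
  simpa only [inv, ArithmeticFunction.coe_mk, ← Icc_add_one_left_eq_Ioc, zero_add, div_eq_mul_inv,
    cast_harmonic_eq_sum_Icc] using sum_Ioc_card_divisors_mul_eq_sum_sum inv_mul N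

theorem two_mul_sum_Icc_mul_sum_Icc {R : Type*} [CommSemiring R] (a : ℕ → R) (N : ℕ) :
    2 * ∑ d ∈ Icc 1 N, a d * ∑ k ∈ Icc 1 d, a k =
      (∑ d ∈ Icc 1 N, a d) ^ 2 + ∑ d ∈ Icc 1 N, a d ^ 2 := by
  induction N with
  | zero => simp
  | succ n ih =>
    simp only [sum_Icc_succ_top (Nat.le_add_left 1 n), mul_add, ih]
    ring

theorem two_mul_sum_Icc_inv_mul_harmonic (K : Type*) [Field K] [CharZero K] (N : ℕ) :
    2 * ∑ d ∈ Icc 1 N, (d : K)⁻¹ * (harmonic d : K) =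
      (harmonic N : K) ^ 2 + ∑ d ∈ Icc 1 N, ((d : K) ^ 2)⁻¹ := by
  simp only [cast_harmonic_eq_sum_Icc, two_mul_sum_Icc_mul_sum_Icc, inv_pow]

theorem sum_Icc_inv_sq_le_two {K : Type*} [Field K] [LinearOrder K] [IsStrictOrderedRing K]
    (N : ℕ) : ∑ d ∈ Icc 1 N, ((d : K) ^ 2)⁻¹ ≤ 2 := by
  simpa [Ioo_add_one_right_eq_Ioc, ← Icc_add_one_left_eq_Ioc] using
    sum_Ioo_inv_sq_le (α := K) 0 (N + 1)

end Harmonic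

section Asymptotics

theorem log_add_one_le_log_add_inv {x : ℝ} (hx : 0 < x) : log (x + 1) ≤ log x + x⁻¹ := by
  have h := log_le_sub_one_of_pos (x := (x + 1) / x) (by positivity)
  rw [log_div (by positivity) hx.ne', add_div, div_self hx.ne', one_div] at h
  linarith

theorem abs_harmonic_floor_sub_log_add_eulerMascheroniConstant_le {x : ℝ} (hx : 0 < x) :
    |(harmonic ⌊x⌋₊ : ℝ) - (log x + eulerMascheroniConstant)| ≤ x⁻¹ := by
  set n := ⌊x⌋₊
  have hnx : (n : ℝ) ≤ x := Nat.floor_le hx.le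
  have hxn : x ≤ n + 1 := (Nat.lt_floor_add_one x).le
  have upper : (harmonic n : ℝ) - log (n + 1) < eulerMascheroniConstant :=
    eulerMascheroniSeq_lt_eulerMascheroniConstant n
  have lower : eulerMascheroniConstant < harmonic n + ((n : ℝ) + 1)⁻¹ - log (n + 1) := by
    simpa [eulerMascheroniSeq'] using eulerMascheroniConstant_lt_eulerMascheroniSeq' (n + 1)
  have log_succ_le : log (n + 1) ≤ log x + x⁻¹ :=
    (log_le_log (by positivity) (by gcongr)).trans (log_add_one_le_log_add_inv hx)
  have log_le_log_succ : log x ≤ log (n + 1) := log_le_log hx hxn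
  have inv_succ_le : ((n : ℝ) + 1)⁻¹ ≤ x⁻¹ := inv_anti₀ hx hxn
  rw [abs_le]
  constructor <;> linarith

theorem abs_harmonic_floor_div_add_harmonic_sub_le {x : ℝ} (hx : 0 < x) {d : ℕ} (hd : 0 < d) :
    |(harmonic (⌊x⌋₊ / d) : ℝ) + harmonic d - (log x + 2 * eulerMascheroniConstant)| ≤
      d / x + (d : ℝ)⁻¹ := by
  have hd' : (0 : ℝ) < d := Nat.cast_pos.2 hd
  have at_div := abs_harmonic_floor_sub_log_add_eulerMascheroniConstant_le (div_pos hx hd')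
  have at_d := abs_harmonic_floor_sub_log_add_eulerMascheroniConstant_le hd'
  rw [Nat.floor_div_natCast, log_div hx.ne' hd'.ne', inv_div] at at_div
  rw [Nat.floor_natCast] at at_d
  refine le_trans (le_of_eq ?_) ((abs_add_le _ _).trans (add_le_add at_div at_d))
  congr 1
  ring

theorem abs_sum_inv_mul_harmonic_floor_div_add_harmonic_sub_le {x : ℝ} (hx : 0 < x) :
    |∑ d ∈ Icc 1 ⌊x⌋₊, (d : ℝ)⁻¹ *
      (harmonic (⌊x⌋₊ / d) + harmonic d - (log x + 2 * eulerMascheroniConstant))| ≤ 3 := by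
  have term_le (d : ℕ) (hd : d ∈ Icc 1 ⌊x⌋₊) :
      |(d : ℝ)⁻¹ * (harmonic (⌊x⌋₊ / d) + harmonic d - (log x + 2 * eulerMascheroniConstant))| ≤
        x⁻¹ + ((d : ℝ) ^ 2)⁻¹ := by
    have hd0 : 0 < d := (mem_Icc.1 hd).1
    rw [abs_mul, abs_of_nonneg (by positivity)]
    calc _ ≤ (d : ℝ)⁻¹ * (d / x + (d : ℝ)⁻¹) := by
          gcongr
          exact abs_harmonic_floor_div_add_harmonic_sub_le hx hd0
      _ = x⁻¹ + ((d : ℝ) ^ 2)⁻¹ := by field_simp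
  calc _ ≤ ∑ d ∈ Icc 1 ⌊x⌋₊, (x⁻¹ + ((d : ℝ) ^ 2)⁻¹) :=
        (abs_sum_le_sum_abs _ _).trans (sum_le_sum term_le)
    _ = ⌊x⌋₊ / x + ∑ d ∈ Icc 1 ⌊x⌋₊, ((d : ℝ) ^ 2)⁻¹ := by
        rw [sum_add_distrib, sum_const, Nat.card_Icc, Nat.add_sub_cancel, nsmul_eq_mul,
          div_eq_mul_inv]
    _ ≤ 1 + 2 := by
        gcongr
        · exact div_le_one_of_le₀ (Nat.floor_le hx.le) hx.le
        · exact sum_Icc_inv_sq_le_two _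
    _ = 3 := by norm_num

theorem abs_sum_inv_mul_harmonic_floor_div_sub_le {x : ℝ} (hx : 0 < x) :
    |∑ d ∈ Icc 1 ⌊x⌋₊, (d : ℝ)⁻¹ * (harmonic (⌊x⌋₊ / d) : ℝ) -
      ((log x + 2 * eulerMascheroniConstant) * harmonic ⌊x⌋₊ - (harmonic ⌊x⌋₊ : ℝ) ^ 2 / 2)| ≤
        4 := by
  have error_le := abs_sum_inv_mul_harmonic_floor_div_add_harmonic_sub_le hx
  simp only [mul_sub, mul_add, sum_sub_distrib, sum_add_distrib, ← sum_mul,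
    ← cast_harmonic_eq_sum_Icc] at error_le
  have sum_eq := two_mul_sum_Icc_inv_mul_harmonic ℝ ⌊x⌋₊
  have inv_sq_nonneg : 0 ≤ ∑ d ∈ Icc 1 ⌊x⌋₊, ((d : ℝ) ^ 2)⁻¹ := by positivity
  have inv_sq_le := sum_Icc_inv_sq_le_two (K := ℝ) ⌊x⌋₊
  rw [abs_le] at error_le ⊢
  constructor <;> linarith

theorem abs_mul_harmonic_floor_sub_sq_sub_le {x : ℝ} (hx : 1 ≤ x) :
    |((log x + 2 * eulerMascheroniConstant) * harmonic ⌊x⌋₊ - (harmonic ⌊x⌋₊ : ℝ) ^ 2 / 2) -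
      (1 / 2 * log x ^ 2 + 2 * eulerMascheroniConstant * log x)| ≤ 1 := by
  set γ := eulerMascheroniConstant
  set e := (harmonic ⌊x⌋₊ : ℝ) - (log x + γ) with he
  have e_le : |e| ≤ 1 :=
    (abs_harmonic_floor_sub_log_add_eulerMascheroniConstant_le (by positivity)).trans
      (inv_le_one_of_one_le₀ hx)
  have γ_pos : 1 / 2 < γ := one_half_lt_eulerMascheroniConstant
  have γ_lt : γ < 2 / 3 := eulerMascheroniConstant_lt_two_thirds
  have complete_square : ((log x + 2 * γ) * harmonic ⌊x⌋₊ - (harmonic ⌊x⌋₊ : ℝ) ^ 2 / 2) -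
      (1 / 2 * log x ^ 2 + 2 * γ * log x) = 2 * γ ^ 2 - (γ - e) ^ 2 / 2 := by
    rw [he]
    ring
  have sq_lower : (1 / 2) ^ 2 ≤ γ ^ 2 := by gcongr
  have sq_upper : γ ^ 2 ≤ (2 / 3) ^ 2 := by gcongr
  have sq_sub_le : (γ - e) ^ 2 ≤ (5 / 3) ^ 2 := by
    rw [abs_le] at e_le
    exact sq_le_sq' (by linarith) (by linarith)
  rw [complete_square, abs_le]
  constructor <;> linarith [sq_nonneg (γ - e)]

end Asymptotics

/-- Hyperbola-method estimate: `Σ_{n ≤ X} τ(n)/n = (1/2) (log X)^2 + 2C log X + O(1)`,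
where `C` is the Euler–Mascheroni constant. -/
theorem stmt16 :
    ∃ B : ℝ, 0 < B ∧ ∀ X : ℝ, 1 ≤ X →
      |(∑ n ∈ Finset.Icc 1 ⌊X⌋₊, (n.divisors.card : ℝ) / n) -
          (1 / 2 * Real.log X ^ 2 + 2 * Real.eulerMascheroniConstant * Real.log X)| ≤ B := by
  refine ⟨4 + 1, by norm_num, fun X hX => ?_⟩
  rw [sum_Icc_card_divisors_div_eq_sum_inv_mul_harmonic]
  exact (abs_sub_le _ _ _).trans (add_le_add
    (abs_sum_inv_mul_harmonic_floor_div_sub_le (zero_lt_one.trans_le hX))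
    (abs_mul_harmonic_floor_sub_sq_sub_le hX))
end

section
/- Let ζ denote the Riemann zeta function and suppose ρ = β + iγ is a zero of ζ with β > 7/8 and |ρ| > 10^{12}; let δ be the unique real number with −π < δ ≤ π such that γ·log 2 = 2πn + δ for some integer n, and suppose |δ| > π/100. Let χ be a real primitive Dirichlet character modulo D with D ≡ 0 (mod 4) and D > 10^9, and set U = |ρ|·D^{1/4}·log D. Then Σ_{n ≤ U^6} (τ(n)/n^β) · | Σ_{r ≤ U^{12}/n} (−1)^r (1*χ)(r)/r^ρ | < 96 · U^{10−12β} · (log U)^2. -/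
open Complex

/-!
At a zero of `ζ` in `0 < re s` the alternating series `∑ (-1) ^ n n ^ (-s)` converges to
`(2 ^ (1 - s) - 1) ζ(s) = 0`, so its partial sums are minus its tails, and Abel summation bounds
them by `O(|s| N ^ (-re s))`. For even `D` a character mod `D` lives on odd integers, so
`(-1) ^ r (1 * χ)(r) = ∑ χ(d) (-1) ^ (r / d)` over `d ∣ r`, a Dirichlet convolution. In the
hyperbola method the divisors `d ≤ A` are handled by the bound for the alternating series, the
larger ones by the Pólya–Vinogradov inequality.
-/

section AbelSummation

open Finset

lemma norm_sum_range_smul_le {R E : Type*} [SeminormedRing R] [SeminormedAddCommGroup E]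
    [Module R E] [IsBoundedSMul R E] (f : ℕ → R) {c : ℕ → E} {M : ℝ}
    (hM : ∀ k, ‖∑ i ∈ range k, c i‖ ≤ M) (n : ℕ) :
    ‖∑ i ∈ range n, f i • c i‖ ≤
      M * (‖f (n - 1)‖ + ∑ i ∈ range (n - 1), ‖f (i + 1) - f i‖) := by
  rw [sum_range_by_parts, mul_add, mul_sum]
  refine (norm_sub_le _ _).trans (add_le_add ?_ (norm_sum_le_of_le _ fun i _ ↦ ?_)) <;>
  · refine (norm_smul_le _ _).trans ?_
    rw [mul_comm]
    gcongr
    exact hM _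

lemma norm_cpow_neg_sub_cpow_neg_le {s : ℂ} (hs : 0 < s.re) {a b : ℝ} (ha : 0 < a) (hab : a ≤ b) :
    ‖(b : ℂ) ^ (-s) - (a : ℂ) ^ (-s)‖ ≤ ‖s‖ / s.re * (a ^ (-s.re) - b ^ (-s.re)) := by
  have hs0 : s ≠ 0 := fun h ↦ by simp [h] at hs
  have h0 : (0 : ℝ) ∉ Set.uIcc a b := Set.notMem_uIcc_of_lt ha (ha.trans_le hab)
  have hcpow : (b : ℂ) ^ (-s) - (a : ℂ) ^ (-s) = -s * ∫ t in a..b, (t : ℂ) ^ (-s - 1) := by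
    rw [integral_cpow (.inr ⟨by simpa [sub_eq_iff_eq_add] using hs0, h0⟩), sub_add_cancel,
      mul_div_cancel₀ _ (neg_ne_zero.2 hs0)]
  have hrpow : ∫ t in a..b, t ^ (-s.re - 1) = (a ^ (-s.re) - b ^ (-s.re)) / s.re := by
    rw [integral_rpow (.inr ⟨by linarith, h0⟩), sub_add_cancel, div_neg, ← neg_div, neg_sub]
  calc ‖(b : ℂ) ^ (-s) - (a : ℂ) ^ (-s)‖
      ≤ ‖s‖ * ∫ t in a..b, ‖(t : ℂ) ^ (-s - 1)‖ := by
        rw [hcpow, norm_mul, norm_neg]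
        gcongr
        exact intervalIntegral.norm_integral_le_integral_norm hab
    _ = ‖s‖ * ∫ t in a..b, t ^ (-s.re - 1) := by
        congr 1
        refine intervalIntegral.integral_congr fun t ht ↦ ?_
        rw [Set.uIcc_of_le hab] at ht
        simp [norm_cpow_eq_rpow_re_of_pos (ha.trans_le ht.1)]
    _ = ‖s‖ / s.re * (a ^ (-s.re) - b ^ (-s.re)) := by rw [hrpow]; ring

lemma norm_sum_Ioc_mul_cpow_neg_le {c : ℕ → ℂ} {M : ℝ} {a : ℕ}
    (hM : ∀ m, ‖∑ n ∈ Ioc a m, c n‖ ≤ M) {s : ℂ} (hs : 0 < s.re) (b : ℕ) :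
    ‖∑ n ∈ Ioc a b, c n * (n : ℂ) ^ (-s)‖ ≤
      M * (1 + ‖s‖ / s.re) * ((a : ℝ) + 1) ^ (-s.re) := by
  have hM0 : 0 ≤ M := (norm_nonneg _).trans (hM a)
  have hshift (f : ℕ → ℂ) (m : ℕ) : ∑ n ∈ Ioc a m, f n = ∑ i ∈ range (m - a), f (a + 1 + i) := by
    rw [← Ico_add_one_add_one_eq_Ioc, sum_Ico_eq_sum_range, Nat.add_sub_add_right]
  have hpartial (k : ℕ) : ‖∑ i ∈ range k, c (a + 1 + i)‖ ≤ M := by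
    simpa [hshift] using hM (a + k)
  set g : ℕ → ℝ := fun i ↦ ((a + 1 + i : ℕ) : ℝ) ^ (-s.re) with hg
  have hgnn (i : ℕ) : 0 ≤ g i := by positivity
  have hnorm (i : ℕ) : ‖((a + 1 + i : ℕ) : ℂ) ^ (-s)‖ = g i := by
    rw [norm_natCast_cpow_of_pos (by lia), neg_re]
  have hdiff (i : ℕ) : ‖((a + 1 + (i + 1) : ℕ) : ℂ) ^ (-s) - ((a + 1 + i : ℕ) : ℂ) ^ (-s)‖ ≤
      ‖s‖ / s.re * (g i - g (i + 1)) := by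
    simpa only [ofReal_natCast] using norm_cpow_neg_sub_cpow_neg_le hs
      (a := (a + 1 + i : ℕ)) (b := (a + 1 + (i + 1) : ℕ)) (by positivity) (by gcongr; lia)
  have hmono (k : ℕ) : g k ≤ g 0 :=
    Real.rpow_le_rpow_of_nonpos (by positivity) (by gcongr; lia) (by linarith)
  set k := b - a - 1
  calc ‖∑ n ∈ Ioc a b, c n * (n : ℂ) ^ (-s)‖
      ≤ M * (g k + ∑ i ∈ range k, ‖s‖ / s.re * (g i - g (i + 1))) := by
        simp only [hshift, mul_comm (c _)]
        refine (norm_sum_range_smul_le (fun i ↦ ((a + 1 + i : ℕ) : ℂ) ^ (-s)) hpartial _).trans ?_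
        gcongr with i
        · exact (hnorm _).le
        · exact hdiff i
    _ = M * (g k + ‖s‖ / s.re * (g 0 - g k)) := by rw [← mul_sum, sum_range_sub']
    _ ≤ M * (g 0 + ‖s‖ / s.re * g 0) := by
        gcongr
        · exact hmono k
        · linarith [hgnn k]
    _ = M * (1 + ‖s‖ / s.re) * ((a : ℝ) + 1) ^ (-s.re) := by
        have hg0 : g 0 = ((a : ℝ) + 1) ^ (-s.re) := by simp [hg]
        rw [hg0]
        ring

end AbelSummation

section BoundedPartialSums

open Finset Filter Topology

variable {c : ℕ → ℂ} {M : ℝ}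

lemma tendsto_mul_natCast_add_one_rpow_neg (K : ℝ) {σ : ℝ} (hσ : 0 < σ) :
    Tendsto (fun N : ℕ ↦ K * ((N : ℝ) + 1) ^ (-σ)) atTop (𝓝 0) := by
  simpa using ((tendsto_rpow_neg_atTop hσ).comp
    (tendsto_atTop_add_const_right _ 1 tendsto_natCast_atTop_atTop)).const_mul K

lemma exists_tendsto_sum_Ioc_mul_cpow_neg (hM : ∀ a m, ‖∑ n ∈ Ioc a m, c n‖ ≤ M) {s : ℂ}
    (hs : 0 < s.re) :
    ∃ l, Tendsto (fun N : ℕ ↦ ∑ n ∈ Ioc 0 N, c n * (n : ℂ) ^ (-s)) atTop (𝓝 l) := by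
  refine cauchySeq_tendsto_of_complete (cauchySeq_of_le_tendsto_0' _ (fun a b hab ↦ ?_)
    (tendsto_mul_natCast_add_one_rpow_neg (M * (1 + ‖s‖ / s.re)) hs))
  rw [dist_eq_norm', ← sum_Ioc_consecutive _ a.zero_le hab, add_sub_cancel_left]
  exact norm_sum_Ioc_mul_cpow_neg_le (hM a) hs b

lemma norm_sub_sum_Ioc_le_of_tendsto (hM : ∀ a m, ‖∑ n ∈ Ioc a m, c n‖ ≤ M) {s l : ℂ}
    (hs : 0 < s.re)
    (hl : Tendsto (fun N : ℕ ↦ ∑ n ∈ Ioc 0 N, c n * (n : ℂ) ^ (-s)) atTop (𝓝 l)) (N : ℕ) :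
    ‖l - ∑ n ∈ Ioc 0 N, c n * (n : ℂ) ^ (-s)‖ ≤
      M * (1 + ‖s‖ / s.re) * ((N : ℝ) + 1) ^ (-s.re) := by
  refine le_of_tendsto (hl.sub_const _).norm ((eventually_ge_atTop N).mono fun m hm ↦ ?_)
  rw [← sum_Ioc_consecutive _ N.zero_le hm, add_sub_cancel_left]
  exact norm_sum_Ioc_mul_cpow_neg_le (hM N) hs m

lemma differentiableOn_of_tendsto_sum_Ioc (hM : ∀ a m, ‖∑ n ∈ Ioc a m, c n‖ ≤ M) {G : ℂ → ℂ}
    (hG : ∀ s : ℂ, 0 < s.re →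
      Tendsto (fun N : ℕ ↦ ∑ n ∈ Ioc 0 N, c n * (n : ℂ) ^ (-s)) atTop (𝓝 (G s))) :
    DifferentiableOn ℂ G {s | 0 < s.re} := by
  have hM0 : 0 ≤ M := (norm_nonneg _).trans (hM 0 0)
  have hopen : IsOpen {s : ℂ | 0 < s.re} := isOpen_lt continuous_const continuous_re
  have hlim : TendstoLocallyUniformlyOn (fun N s ↦ ∑ n ∈ Ioc 0 N, c n * (n : ℂ) ^ (-s)) G atTop
      {s | 0 < s.re} := by
    rw [tendstoLocallyUniformlyOn_iff_forall_isCompact hopen]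
    intro K hK hKc
    obtain ⟨R, hR⟩ := hKc.isBounded.exists_norm_le
    obtain rfl | hne := K.eq_empty_or_nonempty
    · exact tendstoUniformlyOn_empty
    obtain ⟨z, hz, hzmin⟩ := hKc.exists_isMinOn hne continuous_re.continuousOn
    have hz0 : 0 < z.re := hK hz
    refine Metric.tendstoUniformlyOn_iff.2 fun ε hε ↦ ?_
    filter_upwards [(tendsto_mul_natCast_add_one_rpow_neg (M * (1 + R / z.re))
      hz0).eventually_lt_const hε] with N hN s hs
    have hzs : z.re ≤ s.re := hzmin hs
    rw [dist_eq_norm]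
    refine (norm_sub_sum_Ioc_le_of_tendsto hM (hK hs) (hG s (hK hs)) N).trans_lt
      (lt_of_le_of_lt ?_ hN)
    have hR0 : 0 ≤ R := (norm_nonneg s).trans (hR s hs)
    gcongr
    · exact hR s hs
    · linarith [N.cast_nonneg (α := ℝ)]
  refine hlim.differentiableOn (.of_forall fun N ↦ ?_) hopen
  refine DifferentiableOn.fun_sum fun n hn ↦ (Differentiable.const_mul ?_ _).differentiableOn
  exact differentiable_neg.const_cpow (.inl <| Nat.cast_ne_zero.2 (mem_Ioc.1 hn).1.ne')

lemma tendsto_sum_Ioc_LSeries {s : ℂ} (h : LSeriesSummable c s) :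
    Tendsto (fun N : ℕ ↦ ∑ n ∈ Ioc 0 N, c n * (n : ℂ) ^ (-s)) atTop (𝓝 (LSeries c s)) := by
  refine (h.LSeriesHasSum.tendsto_sum_nat.comp (tendsto_add_atTop_nat 1)).congr fun N ↦ ?_
  rw [Function.comp_apply, range_eq_Ico, sum_eq_sum_Ico_succ_bot N.succ_pos,
    LSeries.term_zero, zero_add]
  refine sum_congr (Ico_add_one_add_one_eq_Ioc 0 N) fun n hn ↦ ?_
  rw [LSeries.term_of_ne_zero (mem_Ioc.1 hn).1.ne', cpow_neg, div_eq_mul_inv]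

/- The limit of the partial sums is holomorphic on `0 < re s`, so it agrees there with any
holomorphic continuation of the Dirichlet series from `1 < re s`. -/
theorem norm_sub_sum_Ioc_mul_cpow_neg_le (hM : ∀ a m, ‖∑ n ∈ Ioc a m, c n‖ ≤ M) {F : ℂ → ℂ}
    (hF : DifferentiableOn ℂ F {s | 0 < s.re}) (hFc : ∀ s : ℂ, 1 < s.re → F s = LSeries c s)
    {s : ℂ} (hs : 0 < s.re) (N : ℕ) :
    ‖F s - ∑ n ∈ Ioc 0 N, c n * (n : ℂ) ^ (-s)‖ ≤
      M * (1 + ‖s‖ / s.re) * ((N : ℝ) + 1) ^ (-s.re) := by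
  choose! G hG using fun s hs ↦ exists_tendsto_sum_Ioc_mul_cpow_neg (s := s) hM hs
  have hopen : IsOpen {s : ℂ | 0 < s.re} := isOpen_lt continuous_const continuous_re
  have hc (n : ℕ) (hn : n ≠ 0) : ‖c n‖ ≤ M := by
    obtain ⟨k, rfl⟩ := Nat.exists_eq_succ_of_ne_zero hn
    simpa using hM k (k + 1)
  have heq : F =ᶠ[𝓝 2] G := by
    filter_upwards [(isOpen_lt continuous_const continuous_re).mem_nhds
      (show (1 : ℝ) < (2 : ℂ).re by simp)] with z hz
    rw [hFc z hz]
    exact tendsto_nhds_unique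
      (tendsto_sum_Ioc_LSeries (LSeriesSummable_of_bounded_of_one_lt_re hc hz))
      (hG z (one_pos.trans hz))
  have hFG : Set.EqOn F G {s | 0 < s.re} :=
    (hF.analyticOnNhd hopen).eqOn_of_preconnected_of_eventuallyEq
      ((differentiableOn_of_tendsto_sum_Ioc hM hG).analyticOnNhd hopen)
      (convex_halfSpace_re_gt 0).isPreconnected (by simp) heq
  rw [hFG hs]
  exact norm_sub_sum_Ioc_le_of_tendsto hM hs (hG s hs) N

end BoundedPartialSums

section Eta

open Finset

lemma norm_sum_Ioc_pow_le {K : Type*} [NormedField K] {w : K} (hw : ‖w‖ = 1) (hw1 : w ≠ 1)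
    (a m : ℕ) : ‖∑ n ∈ Ioc a m, w ^ n‖ ≤ 2 / ‖w - 1‖ := by
  obtain h | h := le_total m a
  · rw [Ioc_eq_empty_of_le h, sum_empty, norm_zero]
    positivity
  · rw [← Ico_add_one_add_one_eq_Ioc, geom_sum_Ico hw1 (by lia), norm_div]
    gcongr
    refine (norm_sub_le _ _).trans_eq ?_
    rw [norm_pow, norm_pow, hw, one_pow, one_pow, one_add_one_eq_two]

lemma norm_sum_Ioc_neg_one_pow_le (a m : ℕ) : ‖∑ n ∈ Ioc a m, (-1 : ℂ) ^ n‖ ≤ 1 := by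
  refine (norm_sum_Ioc_pow_le (by simp) (by norm_num) a m).trans_eq ?_
  norm_num

lemma LFunction_neg_one_pow_val {s : ℂ} (hs : s ≠ 1) :
    ZMod.LFunction (fun j : ZMod 2 ↦ (-1 : ℂ) ^ j.val) s = (2 ^ (1 - s) - 1) * riemannZeta s := by
  have htriv : ZMod.LFunction (1 : DirichletCharacter ℂ 2) s =
      (1 - 2 ^ (-s)) * riemannZeta s :=
    (DirichletCharacter.LFunctionTrivChar_eq_mul_riemannZeta hs).trans
      (by simp [Nat.prime_two.primeFactors])
  have h0 : (1 : DirichletCharacter ℂ 2) 0 = 0 := MulChar.map_zero _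
  have hsum (f : ZMod 2 → ℂ) : ∑ j, f j = f 0 + f 1 := Fin.sum_univ_two f
  have h2 : (2 : ℂ) ^ (1 - s) = 2 * 2 ^ (-s) := by
    rw [sub_eq_add_neg, cpow_add _ _ two_ne_zero, cpow_one]
  rw [ZMod.LFunction, hsum] at htriv ⊢
  simp only [map_zero, map_one, HurwitzZeta.hurwitzZeta_zero, ZMod.val_zero, ZMod.val_one, h0,
    Nat.cast_ofNat, pow_zero, pow_one, one_mul, zero_mul, zero_add] at htriv ⊢
  rw [h2]
  linear_combination -htriv

theorem norm_sum_Ioc_neg_one_pow_mul_cpow_neg_le {s : ℂ} (hs : 0 < s.re)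
    (hζ : riemannZeta s = 0) (N : ℕ) :
    ‖∑ n ∈ Ioc 0 N, (-1 : ℂ) ^ n * (n : ℂ) ^ (-s)‖ ≤
      (1 + ‖s‖ / s.re) * ((N : ℝ) + 1) ^ (-s.re) := by
  have hs1 : s ≠ 1 := by
    rintro rfl
    exact riemannZeta_one_ne_zero hζ
  set Φ : ZMod 2 → ℂ := fun j ↦ (-1) ^ j.val with hΦ
  have hΦcast (n : ℕ) : Φ n = (-1) ^ n := by
    simp only [hΦ, ZMod.val_natCast, ← neg_one_pow_eq_pow_mod_two]
  have hΦsum : ∑ j, Φ j = 0 :=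
    (Fin.sum_univ_two Φ).trans (show Φ 0 + Φ 1 = 0 by simp [hΦ, ZMod.val_one])
  have hL (z : ℂ) (hz : 1 < z.re) : ZMod.LFunction Φ z = LSeries (fun n ↦ (-1) ^ n) z := by
    rw [ZMod.LFunction_eq_LSeries Φ hz]
    simp only [hΦcast]
  simpa [hΦ, LFunction_neg_one_pow_val hs1, hζ] using norm_sub_sum_Ioc_mul_cpow_neg_le
    norm_sum_Ioc_neg_one_pow_le (ZMod.differentiable_LFunction_of_sum_zero hΦsum).differentiableOn
    hL hs N

end Eta

section PolyaVinogradov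

open Finset ZMod

lemma two_mul_mul_one_sub_le_sin_pi_mul {t : ℝ} (h0 : 0 ≤ t) (h1 : t ≤ 1) :
    2 * t * (1 - t) ≤ Real.sin (Real.pi * t) := by
  wlog h : t ≤ 1 / 2 generalizing t
  · have h' := this (t := 1 - t) (by linarith) (by linarith) (by linarith)
    rw [mul_one_sub Real.pi, Real.sin_pi_sub] at h'
    linarith
  · have hsin : 2 * t ≤ Real.sin (Real.pi * t) := by
      have h' := Real.mul_le_sin (x := Real.pi * t) (by positivity) (by nlinarith [Real.pi_pos])
      rwa [← mul_assoc, div_mul_cancel₀ _ Real.pi_ne_zero] at h'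
    nlinarith

variable {D : ℕ} [NeZero D]

lemma norm_stdAddChar_sub_one (j : ZMod D) :
    ‖stdAddChar j - 1‖ = 2 * Real.sin (Real.pi * (j.val / D)) := by
  have hj : (j.val / D : ℝ) ≤ 1 := div_le_one_of_le₀ (by exact_mod_cast j.val_le) (by positivity)
  have hexp : stdAddChar j = exp (I * ((2 * (Real.pi * (j.val / D)) : ℝ) : ℂ)) := by
    conv_lhs => rw [← natCast_zmod_val j, ← Int.cast_natCast, stdAddChar_coe]
    congr 1
    push_cast
    ring
  rw [hexp, norm_exp_I_mul_ofReal_sub_one, mul_div_cancel_left₀ _ two_ne_zero, Real.norm_of_nonneg]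
  have := Real.sin_nonneg_of_nonneg_of_le_pi (x := Real.pi * (j.val / D)) (by positivity)
    (mul_le_of_le_one_right Real.pi_pos.le hj)
  positivity

lemma norm_sum_Ioc_stdAddChar_mul_le {j : ZMod D} (hj : j ≠ 0) (a m : ℕ) :
    ‖∑ n ∈ Ioc a m, stdAddChar (j * (n : ZMod D))‖ ≤
      D / 2 * ((j.val : ℝ)⁻¹ + ((-j).val : ℝ)⁻¹) := by
  have : NeZero j := ⟨hj⟩
  have hD : (0 : ℝ) < D := by exact_mod_cast Nat.pos_of_neZero D
  have hv : (0 : ℝ) < j.val := by exact_mod_cast val_pos.2 hj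
  have hvD : (0 : ℝ) < D - j.val := sub_pos.2 (by exact_mod_cast j.val_lt)
  have hlow : 4 * (j.val / D : ℝ) * (1 - j.val / D) ≤ ‖stdAddChar j - 1‖ := by
    rw [norm_stdAddChar_sub_one]
    linarith [two_mul_mul_one_sub_le_sin_pi_mul (t := j.val / D) (by positivity)
      (div_le_one_of_le₀ (by linarith) hD.le)]
  have hpos : 0 < 4 * (j.val / D : ℝ) * (1 - j.val / D) := by
    rw [one_sub_div hD.ne']
    positivity
  have hpow (n : ℕ) : stdAddChar (j * (n : ZMod D)) = stdAddChar j ^ n := by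
    rw [← AddChar.map_nsmul_eq_pow, nsmul_eq_mul, mul_comm]
  calc ‖∑ n ∈ Ioc a m, stdAddChar (j * (n : ZMod D))‖
      ≤ 2 / ‖stdAddChar j - 1‖ := by
        simp only [hpow]
        exact norm_sum_Ioc_pow_le (AddChar.norm_apply _ _)
          (sub_ne_zero.1 (norm_pos_iff.1 (hpos.trans_le hlow))) a m
    _ ≤ 2 / (4 * (j.val / D : ℝ) * (1 - j.val / D)) := by gcongr
    _ = D / 2 * ((j.val : ℝ)⁻¹ + ((-j).val : ℝ)⁻¹) := by
        rw [val_neg_of_ne_zero, Nat.cast_sub j.val_le, one_sub_div hD.ne']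
        field

lemma sum_Ioc_inv_le_one_add_log (N : ℕ) : ∑ n ∈ Ioc 0 N, (n : ℝ)⁻¹ ≤ 1 + Real.log N := by
  have h := harmonic_le_one_add_log N
  rw [harmonic_eq_sum_Icc] at h
  push_cast at h
  exact h

lemma sum_zmod_inv_val_le : ∑ j : ZMod D, (j.val : ℝ)⁻¹ ≤ 1 + Real.log D := by
  have hsum : ∑ j : ZMod D, (j.val : ℝ)⁻¹ = ∑ n ∈ range D, (n : ℝ)⁻¹ :=
    sum_nbij' val Nat.cast (fun j _ ↦ mem_range.2 j.val_lt) (fun _ _ ↦ mem_univ _)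
      (fun j _ ↦ natCast_zmod_val j) (fun n hn ↦ val_cast_of_lt (mem_range.1 hn)) fun _ _ ↦ rfl
  rw [hsum]
  calc ∑ n ∈ range D, (n : ℝ)⁻¹
      ≤ ∑ n ∈ range (D + 1), (n : ℝ)⁻¹ :=
        sum_le_sum_of_subset_of_nonneg (range_subset_range.2 D.le_succ) fun _ _ _ ↦ by positivity
    _ = ∑ n ∈ Ioc 0 D, (n : ℝ)⁻¹ := by
        rw [range_eq_Ico, sum_eq_sum_Ico_succ_bot D.succ_pos, Nat.cast_zero,
          inv_zero (G₀ := ℝ), zero_add (∑ _ ∈ _, _), Nat.succ_eq_add_one,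
          Ico_add_one_add_one_eq_Ioc]
    _ ≤ 1 + Real.log D := sum_Ioc_inv_le_one_add_log D

lemma norm_gaussSum_stdAddChar {χ : DirichletCharacter ℂ D} (hχ : χ.IsPrimitive) :
    ‖gaussSum χ stdAddChar‖ = √D := by
  set g := gaussSum χ stdAddChar
  have hdft : 𝓕 χ = fun k ↦ χ⁻¹ (-k) * g :=
    funext hχ.fourierTransform_eq_inv_mul_gaussSum
  have hstar : 𝓕 ⇑χ⁻¹ 1 = star g := by
    rw [star_gaussSum_eq, DirichletCharacter.fourierTransform_eq_gaussSum_mulShift,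
      AddChar.inv_mulShift]
  have hinv : star g * g = D := by
    have h := congrFun (dft_dft χ) (-1)
    rw [hdft, dft_mul_const (fun k ↦ χ⁻¹ (-k)) g, dft_comp_neg] at h
    simpa only [neg_neg, hstar, map_one, smul_eq_mul, mul_one] using h
  rw [eq_comm, Real.sqrt_eq_iff_mul_self_eq (by positivity) (norm_nonneg _)]
  simpa [eq_comm] using congrArg norm hinv

theorem norm_sum_Ioc_dirichletCharacter_le {χ : DirichletCharacter ℂ D} (hχ : χ.IsPrimitive)
    (hD : D ≠ 1) (a m : ℕ) : ‖∑ n ∈ Ioc a m, χ n‖ ≤ √D * (1 + Real.log D) := by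
  have : Nontrivial (ZMod D) := nontrivial_iff.2 hD
  have hD0 : (0 : ℝ) < D := by exact_mod_cast Nat.pos_of_neZero D
  have hconj : ‖∑ n ∈ Ioc a m, χ n‖ = ‖∑ n ∈ Ioc a m, χ⁻¹ n‖ := by
    rw [← norm_star, star_sum]
    simp only [MulChar.star_apply']
  have hgauss : (∑ n ∈ Ioc a m, χ⁻¹ n) * gaussSum χ stdAddChar =
      ∑ j, χ j * ∑ n ∈ Ioc a m, stdAddChar (j * (n : ZMod D)) := by
    simp only [sum_mul, ← gaussSum_mulShift_of_isPrimitive _ hχ]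
    simp only [mul_sum, gaussSum, AddChar.mulShift_apply, mul_comm (Nat.cast _ : ZMod D)]
    exact sum_comm
  have hterm (j : ZMod D) : ‖χ j * ∑ n ∈ Ioc a m, stdAddChar (j * (n : ZMod D))‖ ≤
      D / 2 * ((j.val : ℝ)⁻¹ + ((-j).val : ℝ)⁻¹) := by
    obtain rfl | hj := eq_or_ne j 0
    · simp [MulChar.map_zero]
    · rw [norm_mul]
      exact (mul_le_of_le_one_left (norm_nonneg _) (χ.norm_le_one j)).trans
        (norm_sum_Ioc_stdAddChar_mul_le hj a m)
  have hneg : ∑ j : ZMod D, ((-j).val : ℝ)⁻¹ = ∑ j : ZMod D, (j.val : ℝ)⁻¹ :=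
    Equiv.sum_comp (Equiv.neg (ZMod D)) fun j ↦ (j.val : ℝ)⁻¹
  have hmul : ‖∑ n ∈ Ioc a m, χ n‖ * √D ≤ √D * (1 + Real.log D) * √D := by
    calc ‖∑ n ∈ Ioc a m, χ n‖ * √D
        = ‖∑ j, χ j * ∑ n ∈ Ioc a m, stdAddChar (j * (n : ZMod D))‖ := by
          rw [hconj, ← norm_gaussSum_stdAddChar hχ, ← norm_mul, hgauss]
      _ ≤ ∑ j : ZMod D, D / 2 * ((j.val : ℝ)⁻¹ + ((-j).val : ℝ)⁻¹) :=
          norm_sum_le_of_le _ fun j _ ↦ hterm j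
      _ = D * ∑ j : ZMod D, (j.val : ℝ)⁻¹ := by
          rw [← mul_sum, sum_add_distrib, hneg]
          ring
      _ ≤ D * (1 + Real.log D) := by
          gcongr
          exact sum_zmod_inv_val_le
      _ = √D * (1 + Real.log D) * √D := by
          rw [mul_right_comm, Real.mul_self_sqrt hD0.le]
  exact le_of_mul_le_mul_right hmul (Real.sqrt_pos.2 hD0)

end PolyaVinogradov

section DivisorSums

open Finset

lemma sum_Ioc_sum_divisors {M : Type*} [AddCommMonoid M] (F : ℕ → ℕ → M) (N : ℕ) :
    ∑ n ∈ Ioc 0 N, ∑ d ∈ n.divisors, F d (n / d) =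
      ∑ d ∈ Ioc 0 N, ∑ e ∈ Ioc 0 (N / d), F d e := by
  have hfiber (n : ℕ) (hn : n ∈ Ioc 0 N) : ∑ d ∈ n.divisors, F d (n / d) =
      ∑ d ∈ Ioc 0 N, ∑ e ∈ Ioc 0 N, if d * e = n then F d e else 0 := by
    obtain ⟨hn0, hnN⟩ := mem_Ioc.1 hn
    rw [← Nat.sum_divisorsAntidiagonal F,
      Nat.divisorsAntidiagonal_eq_prod_filter_of_le hn0.ne' hnN, sum_filter, sum_product]
  rw [sum_congr rfl hfiber, sum_comm]
  refine sum_congr rfl fun d hd ↦ ?_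
  have hd0 := (mem_Ioc.1 hd).1
  rw [sum_comm]
  simp only [sum_ite_eq, ← sum_filter]
  refine sum_congr ?_ fun _ _ ↦ rfl
  ext e
  simp only [mem_filter, mem_Ioc, Nat.le_div_iff_mul_le hd0, mul_comm d]
  constructor
  · tauto
  · rintro ⟨he, hle⟩
    exact ⟨⟨he, (Nat.le_mul_of_pos_right e hd0).trans hle⟩, Nat.mul_pos he hd0, hle⟩

lemma sum_Ioc_rpow_sub_one_le {p : ℝ} (hp : 0 < p) (hp1 : p ≤ 1) (N : ℕ) :
    ∑ n ∈ Ioc 0 N, (n : ℝ) ^ (p - 1) ≤ (N : ℝ) ^ p / p := by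
  induction N with
  | zero => simp [hp.ne']
  | succ n ih =>
    have hn : (0 : ℝ) < n + 1 := n.cast_add_one_pos
    have hbern := rpow_one_add_le_one_add_mul_self (s := -(1 / ((n : ℝ) + 1)))
      (neg_le_neg (div_le_one_of_le₀ (by simp) hn.le)) hp.le hp1
    have hstep : (n : ℝ) ^ p + p * ((n : ℝ) + 1) ^ (p - 1) ≤ ((n : ℝ) + 1) ^ p := by
      rw [← sub_eq_add_neg, one_sub_div hn.ne', add_sub_cancel_right,
        Real.div_rpow n.cast_nonneg hn.le, div_le_iff₀ (by positivity)] at hbern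
      rw [Real.rpow_sub_one hn.ne']
      linear_combination hbern
    rw [sum_Ioc_succ_top n.zero_le, Nat.cast_add_one, le_div_iff₀ hp]
    rw [le_div_iff₀ hp] at ih
    linear_combination ih + hstep

lemma sum_Ioc_card_divisors_mul_rpow_sub_one_le {p : ℝ} (hp : 0 < p) (hp1 : p ≤ 1) (N : ℕ) :
    ∑ n ∈ Ioc 0 N, (n.divisors.card : ℝ) * (n : ℝ) ^ (p - 1) ≤
      (N : ℝ) ^ p / p * (1 + Real.log N) := by
  have hsplit (n : ℕ) : (n.divisors.card : ℝ) * (n : ℝ) ^ (p - 1) =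
      ∑ d ∈ n.divisors, (d : ℝ) ^ (p - 1) * ((n / d : ℕ) : ℝ) ^ (p - 1) := by
    rw [← nsmul_eq_mul, ← sum_const]
    refine sum_congr rfl fun d hd ↦ ?_
    rw [← Real.mul_rpow d.cast_nonneg (Nat.cast_nonneg _), ← Nat.cast_mul,
      Nat.mul_div_cancel' (Nat.dvd_of_mem_divisors hd)]
  calc ∑ n ∈ Ioc 0 N, (n.divisors.card : ℝ) * (n : ℝ) ^ (p - 1)
      = ∑ d ∈ Ioc 0 N, (d : ℝ) ^ (p - 1) * ∑ e ∈ Ioc 0 (N / d), (e : ℝ) ^ (p - 1) := by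
        simp only [hsplit, mul_sum]
        exact sum_Ioc_sum_divisors (fun d e : ℕ ↦ (d : ℝ) ^ (p - 1) * (e : ℝ) ^ (p - 1)) N
    _ ≤ ∑ d ∈ Ioc 0 N, (N : ℝ) ^ p / p * (d : ℝ)⁻¹ := by
        refine sum_le_sum fun d hd ↦ ?_
        have hd0 : (0 : ℝ) < d := by exact_mod_cast (mem_Ioc.1 hd).1
        calc (d : ℝ) ^ (p - 1) * ∑ e ∈ Ioc 0 (N / d), (e : ℝ) ^ (p - 1)
            ≤ (d : ℝ) ^ (p - 1) * (((N / d : ℕ) : ℝ) ^ p / p) := by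
              gcongr
              exact sum_Ioc_rpow_sub_one_le hp hp1 _
          _ ≤ (d : ℝ) ^ (p - 1) * (((N : ℝ) / d) ^ p / p) := by
              gcongr
              exact Nat.cast_div_le
          _ = (N : ℝ) ^ p / p * (d : ℝ)⁻¹ := by
              rw [Real.rpow_sub_one hd0.ne', Real.div_rpow N.cast_nonneg hd0.le]
              field
    _ ≤ (N : ℝ) ^ p / p * (1 + Real.log N) := by
        rw [← mul_sum]
        gcongr
        exact sum_Ioc_inv_le_one_add_log N

end DivisorSums

section Hyperbola

open Finset

variable {f g : ℕ → ℂ} {s : ℂ}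

lemma sum_Ioc_sum_divisors_mul_cpow (f g : ℕ → ℂ) (s : ℂ) (N : ℕ) :
    ∑ n ∈ Ioc 0 N, (∑ d ∈ n.divisors, f d * g (n / d)) * (n : ℂ) ^ s =
      ∑ d ∈ Ioc 0 N, f d * (d : ℂ) ^ s * ∑ e ∈ Ioc 0 (N / d), g e * (e : ℂ) ^ s := by
  simp only [mul_sum]
  rw [← sum_Ioc_sum_divisors fun d e ↦ f d * (d : ℂ) ^ s * (g e * (e : ℂ) ^ s)]
  refine sum_congr rfl fun n _ ↦ ?_
  rw [sum_mul]
  refine sum_congr rfl fun d hd ↦ ?_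
  have hn : (n : ℂ) ^ s = (d : ℂ) ^ s * ((n / d : ℕ) : ℂ) ^ s := by
    rw [← natCast_mul_natCast_cpow, ← Nat.cast_mul,
      Nat.mul_div_cancel' (Nat.dvd_of_mem_divisors hd)]
  rw [hn]
  ring

lemma norm_sum_small_divisors_le (hf : ∀ d, ‖f d‖ ≤ 1) {C : ℝ} (hs : 0 ≤ s.re)
    (hg : ∀ n : ℕ, ‖∑ e ∈ Ioc 0 n, g e * (e : ℂ) ^ (-s)‖ ≤ C * ((n : ℝ) + 1) ^ (-s.re))
    (a N : ℕ) :
    ‖∑ d ∈ Ioc 0 a, f d * (d : ℂ) ^ (-s) * ∑ e ∈ Ioc 0 (N / d), g e * (e : ℂ) ^ (-s)‖ ≤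
      C * a * ((N : ℝ) + 1) ^ (-s.re) := by
  have hC : 0 ≤ C := by simpa using (norm_nonneg _).trans (hg 0)
  have hterm (d : ℕ) (hd : d ∈ Ioc 0 a) :
      ‖f d * (d : ℂ) ^ (-s) * ∑ e ∈ Ioc 0 (N / d), g e * (e : ℂ) ^ (-s)‖ ≤
        C * ((N : ℝ) + 1) ^ (-s.re) := by
    have hd0 : 0 < d := (mem_Ioc.1 hd).1
    have hN : (N : ℝ) + 1 ≤ d * ((N / d : ℕ) + 1) := by
      exact_mod_cast Nat.lt_mul_div_succ N hd0
    calc ‖f d * (d : ℂ) ^ (-s) * ∑ e ∈ Ioc 0 (N / d), g e * (e : ℂ) ^ (-s)‖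
        ≤ 1 * (d : ℝ) ^ (-s.re) * (C * (((N / d : ℕ) : ℝ) + 1) ^ (-s.re)) := by
          rw [norm_mul, norm_mul, norm_natCast_cpow_of_pos hd0, neg_re]
          gcongr
          · exact hf d
          · exact hg _
      _ = C * (d * (((N / d : ℕ) : ℝ) + 1)) ^ (-s.re) := by
          rw [Real.mul_rpow (by positivity) (by positivity)]
          ring
      _ ≤ C * ((N : ℝ) + 1) ^ (-s.re) := by
          gcongr C * ?_
          exact Real.rpow_le_rpow_of_nonpos (by positivity) hN (neg_nonpos.2 hs)
  refine (norm_sum_le_of_le _ hterm).trans_eq ?_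
  rw [sum_const, Nat.card_Ioc, nsmul_eq_mul, Nat.sub_zero]
  ring

lemma sum_Ioc_rpow_neg_le {σ : ℝ} (hσ : σ ≤ 1) (N : ℕ) :
    ∑ n ∈ Ioc 0 N, (n : ℝ) ^ (-σ) ≤ (N : ℝ) ^ (1 - σ) * (1 + Real.log N) := by
  calc ∑ n ∈ Ioc 0 N, (n : ℝ) ^ (-σ)
      ≤ ∑ n ∈ Ioc 0 N, (N : ℝ) ^ (1 - σ) * (n : ℝ)⁻¹ := by
        refine sum_le_sum fun n hn ↦ ?_
        obtain ⟨hn0, hnN⟩ := mem_Ioc.1 hn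
        rw [← div_eq_mul_inv, le_div_iff₀ (by positivity), ← Real.rpow_add_one (by positivity),
          neg_add_eq_sub]
        have := sub_nonneg.2 hσ
        gcongr
    _ ≤ (N : ℝ) ^ (1 - σ) * (1 + Real.log N) := by
        rw [← mul_sum]
        gcongr
        exact sum_Ioc_inv_le_one_add_log N

lemma norm_sum_large_divisors_le {M : ℝ} (hM : ∀ a m, ‖∑ d ∈ Ioc a m, f d‖ ≤ M)
    (hg : ∀ e, ‖g e‖ ≤ 1) (hs : 0 < s.re) (hs1 : s.re ≤ 1) (a N : ℕ) :
    ‖∑ d ∈ Ioc a N, f d * (d : ℂ) ^ (-s) * ∑ e ∈ Ioc 0 (N / d), g e * (e : ℂ) ^ (-s)‖ ≤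
      M * (1 + ‖s‖ / s.re) * ((a : ℝ) + 1) ^ (-s.re) *
        (((N / (a + 1) : ℕ) : ℝ) ^ (1 - s.re) * (1 + Real.log (N / (a + 1) : ℕ))) := by
  have hM0 : 0 ≤ M := (norm_nonneg _).trans (hM 0 0)
  have hswap : ∑ d ∈ Ioc a N, f d * (d : ℂ) ^ (-s) * ∑ e ∈ Ioc 0 (N / d), g e * (e : ℂ) ^ (-s) =
      ∑ e ∈ Ioc 0 (N / (a + 1)),
        g e * (e : ℂ) ^ (-s) * ∑ d ∈ Ioc a (N / e), f d * (d : ℂ) ^ (-s) := by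
    simp only [mul_sum]
    rw [sum_comm' (t' := Ioc 0 (N / (a + 1))) (s' := fun e ↦ Ioc a (N / e))]
    · exact sum_congr rfl fun e _ ↦ sum_congr rfl fun d _ ↦ mul_comm _ _
    · intro d e
      simp only [mem_Ioc]
      constructor
      · rintro ⟨⟨had, -⟩, he, hle⟩
        rw [Nat.le_div_iff_mul_le (by lia)] at hle
        rw [Nat.le_div_iff_mul_le he, Nat.le_div_iff_mul_le (by lia), mul_comm d]
        exact ⟨⟨had, hle⟩, he, (Nat.mul_le_mul_left e had).trans hle⟩
      · rintro ⟨⟨had, hle⟩, he, -⟩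
        rw [Nat.le_div_iff_mul_le he] at hle
        rw [Nat.le_div_iff_mul_le (by lia), mul_comm e]
        exact ⟨⟨had, (Nat.le_mul_of_pos_right d he).trans hle⟩, he, hle⟩
  rw [hswap]
  calc _ ≤ ∑ e ∈ Ioc 0 (N / (a + 1)),
          (e : ℝ) ^ (-s.re) * (M * (1 + ‖s‖ / s.re) * ((a : ℝ) + 1) ^ (-s.re)) := by
        refine norm_sum_le_of_le _ fun e he ↦ ?_
        rw [norm_mul, norm_mul, norm_natCast_cpow_of_pos (mem_Ioc.1 he).1, neg_re]
        gcongr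
        · exact mul_le_of_le_one_left (by positivity) (hg e)
        · exact norm_sum_Ioc_mul_cpow_neg_le (hM a) hs _
    _ ≤ _ := by
        rw [← sum_mul, mul_comm]
        gcongr
        exact sum_Ioc_rpow_neg_le hs1 _

lemma floor_add_one_rpow_neg_mul_le {A x σ : ℝ} (hA : 0 < A) (hAx : A ≤ x) (hσ : 0 ≤ σ)
    (hσ1 : σ ≤ 1) :
    ((⌊A⌋₊ : ℝ) + 1) ^ (-σ) * (((⌊x⌋₊ / (⌊A⌋₊ + 1) : ℕ) : ℝ) ^ (1 - σ) *
      (1 + Real.log (⌊x⌋₊ / (⌊A⌋₊ + 1) : ℕ))) ≤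
      x ^ (-σ) * (x / A) * (1 + Real.log (x / A)) := by
  have hx : 0 < x := hA.trans_le hAx
  have : 0 ≤ 1 - σ := sub_nonneg.2 hσ1
  have hquot : ((⌊x⌋₊ / (⌊A⌋₊ + 1) : ℕ) : ℝ) ≤ x / A :=
    Nat.cast_div_le.trans (div_le_div₀ hx.le (Nat.floor_le hx.le) hA
      (by exact_mod_cast (Nat.lt_floor_add_one A).le))
  have hlog : Real.log ((⌊x⌋₊ / (⌊A⌋₊ + 1) : ℕ) : ℝ) ≤ Real.log (x / A) := by
    obtain h0 | h0 := Nat.eq_zero_or_pos (⌊x⌋₊ / (⌊A⌋₊ + 1))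
    · rw [h0, Nat.cast_zero, Real.log_zero]
      exact Real.log_nonneg ((one_le_div hA).2 hAx)
    · exact Real.log_le_log (by exact_mod_cast h0) hquot
  calc _ ≤ A ^ (-σ) * ((x / A) ^ (1 - σ) * (1 + Real.log (x / A))) := by
        gcongr ?_ * (?_ * (1 + ?_))
        · exact Real.rpow_le_rpow_of_nonpos hA (Nat.lt_floor_add_one A).le (neg_nonpos.2 hσ)
        · gcongr
    _ = x ^ (-σ) * (x / A) * (1 + Real.log (x / A)) := by
        rw [sub_eq_neg_add, Real.rpow_add_one (by positivity), ← mul_assoc, ← mul_assoc,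
          ← Real.mul_rpow hA.le (by positivity), mul_div_cancel₀ _ hA.ne']

theorem norm_sum_Ioc_sum_divisors_mul_cpow_neg_le {C M : ℝ} (hf : ∀ d, ‖f d‖ ≤ 1)
    (hM : ∀ a m, ‖∑ d ∈ Ioc a m, f d‖ ≤ M) (hg : ∀ e, ‖g e‖ ≤ 1)
    (hC : ∀ n : ℕ, ‖∑ e ∈ Ioc 0 n, g e * (e : ℂ) ^ (-s)‖ ≤ C * ((n : ℝ) + 1) ^ (-s.re))
    (hs : 0 < s.re) (hs1 : s.re ≤ 1) {A x : ℝ} (hA : 0 < A) (hAx : A ≤ x) :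
    ‖∑ n ∈ Ioc 0 ⌊x⌋₊, (∑ d ∈ n.divisors, f d * g (n / d)) * (n : ℂ) ^ (-s)‖ ≤
      x ^ (-s.re) * (C * A + M * (1 + ‖s‖ / s.re) * (x / A) * (1 + Real.log (x / A))) := by
  have hx : 0 < x := hA.trans_le hAx
  have hM0 : 0 ≤ M := (norm_nonneg _).trans (hM 0 0)
  have hC0 : 0 ≤ C := by simpa using (norm_nonneg _).trans (hC 0)
  have hsmall : C * ⌊A⌋₊ * ((⌊x⌋₊ : ℝ) + 1) ^ (-s.re) ≤ C * A * x ^ (-s.re) := by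
    gcongr C * ?_ * ?_
    · exact Nat.floor_le hA.le
    · exact Real.rpow_le_rpow_of_nonpos hx (Nat.lt_floor_add_one x).le (by linarith)
  rw [sum_Ioc_sum_divisors_mul_cpow, ← sum_Ioc_consecutive _ ⌊A⌋₊.zero_le (Nat.floor_mono hAx)]
  refine (norm_add_le_of_le (norm_sum_small_divisors_le hf hs.le hC _ _)
    (norm_sum_large_divisors_le hM hg hs hs1 _ _)).trans ?_
  calc _ ≤ C * A * x ^ (-s.re) + M * (1 + ‖s‖ / s.re) *
          (x ^ (-s.re) * (x / A) * (1 + Real.log (x / A))) := by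
        rw [mul_assoc (M * _)]
        exact add_le_add hsmall (mul_le_mul_of_nonneg_left
          (floor_add_one_rpow_neg_mul_le hA hAx hs.le hs1) (by positivity))
    _ = _ := by ring

end Hyperbola

section TwistedSums

open Finset

lemma neg_one_pow_mul_sum_divisors {D : ℕ} (hD : 2 ∣ D) (χ : DirichletCharacter ℂ D) (r : ℕ) :
    (-1) ^ r * ∑ d ∈ r.divisors, χ d = ∑ d ∈ r.divisors, χ d * (-1) ^ (r / d) := by
  rw [mul_sum]
  refine sum_congr rfl fun d hd ↦ ?_
  obtain ⟨k, rfl⟩ := Nat.dvd_of_mem_divisors hd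
  obtain heven | hodd := d.even_or_odd
  · have hχ : χ d = 0 := by
      refine χ.map_nonunit fun hu ↦ ?_
      have hcop := (ZMod.isUnit_iff_coprime d D).1 hu
      exact Nat.not_coprime_of_dvd_of_dvd one_lt_two heven.two_dvd hD hcop
    rw [hχ, mul_zero, zero_mul]
  · rw [Nat.mul_div_cancel_left _ hodd.pos, pow_mul, hodd.neg_one_pow, mul_comm]

lemma norm_sum_Ioc_neg_one_pow_mul_sum_divisors_le {D : ℕ} [NeZero D] (hD : 2 ∣ D)
    {χ : DirichletCharacter ℂ D} (hχ : χ.IsPrimitive) {s : ℂ} (hζ : riemannZeta s = 0)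
    (hs : 1 / 2 ≤ s.re) (hs1 : 1 ≤ ‖s‖) {A x : ℝ} (hA : 0 < A) (hAx : A ≤ x) :
    ‖∑ r ∈ Ioc 0 ⌊x⌋₊, ((-1) ^ r * ∑ d ∈ r.divisors, χ d) * (r : ℂ) ^ (-s)‖ ≤
      3 * ‖s‖ * x ^ (-s.re) *
        (A + √D * (1 + Real.log D) * (x / A) * (1 + Real.log (x / A))) := by
  have hre : s.re < 1 := by
    by_contra! h
    exact riemannZeta_ne_zero_of_one_le_re h hζ
  have hC : 1 + ‖s‖ / s.re ≤ 3 * ‖s‖ := by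
    have := div_le_div_of_nonneg_left (norm_nonneg s) one_half_pos hs
    linarith
  have hx : 0 < x := hA.trans_le hAx
  have hlog : 0 ≤ Real.log (x / A) := Real.log_nonneg ((one_le_div hA).2 hAx)
  simp only [neg_one_pow_mul_sum_divisors hD]
  refine (norm_sum_Ioc_sum_divisors_mul_cpow_neg_le (f := fun d ↦ χ d) (g := fun e ↦ (-1) ^ e)
    (fun d ↦ χ.norm_le_one d)
    (norm_sum_Ioc_dirichletCharacter_le hχ fun h ↦ by simp [h] at hD) (by simp)
    (norm_sum_Ioc_neg_one_pow_mul_cpow_neg_le (by linarith) hζ) (by linarith) hre.le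
    hA hAx).trans ?_
  calc _ ≤ x ^ (-s.re) * (3 * ‖s‖ * A +
          √D * (1 + Real.log D) * (3 * ‖s‖) * (x / A) * (1 + Real.log (x / A))) := by gcongr
    _ = _ := by ring

/- The choice `A = √x D^(1/4) log D` balances the two terms of the hyperbola bound up to
logarithms. -/
lemma norm_sum_Ioc_neg_one_pow_mul_sum_divisors_le_sqrt {D : ℕ} (hD : 2 ∣ D) (hD3 : 3 ≤ D)
    {χ : DirichletCharacter ℂ D} (hχ : χ.IsPrimitive) {s : ℂ} (hζ : riemannZeta s = 0)
    (hs : 1 / 2 ≤ s.re) (hs1 : 1 ≤ ‖s‖) {x : ℝ} (hx : (D : ℝ) ^ (1 / 4 : ℝ) * Real.log D ≤ √x) :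
    ‖∑ r ∈ Ioc 0 ⌊x⌋₊, ((-1) ^ r * ∑ d ∈ r.divisors, χ d) * (r : ℂ) ^ (-s)‖ ≤
      3 * ‖s‖ * (D : ℝ) ^ (1 / 4 : ℝ) * x ^ (1 / 2 - s.re) *
        (Real.log D + (1 + (Real.log D)⁻¹) * (1 + Real.log x / 2)) := by
  have : NeZero D := ⟨by lia⟩
  have hD1 : (1 : ℝ) ≤ D := by exact_mod_cast Nat.one_le_of_lt hD3
  set l := Real.log D
  set q := (D : ℝ) ^ (1 / 4 : ℝ) with hq
  have hl : 1 ≤ l := (Real.le_log_iff_exp_le (one_pos.trans_le hD1)).2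
    ((Real.exp_one_lt_d9.le.trans (by norm_num)).trans (Nat.ofNat_le_cast.2 hD3))
  have hq1 : 1 ≤ q := Real.one_le_rpow hD1 (by norm_num)
  have hqq : √D = q * q := by
    rw [hq, ← Real.rpow_add (one_pos.trans_le hD1), Real.sqrt_eq_rpow]
    norm_num
  have hql : 1 ≤ q * l := one_le_mul_of_one_le_of_one_le hq1 hl
  have hsx : 0 < √x := one_pos.trans_le (hql.trans hx)
  have hx0 : 0 < x := Real.sqrt_pos.1 hsx
  have hAx : √x * (q * l) ≤ x :=
    (mul_le_mul_of_nonneg_left hx hsx.le).trans_eq (Real.mul_self_sqrt hx0.le)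
  have hquot : x / (√x * (q * l)) = √x / (q * l) := by
    rw [← div_div, Real.div_sqrt]
  have hlog : Real.log (√x / (q * l)) ≤ Real.log x / 2 := by
    rw [← Real.log_sqrt hx0.le]
    exact Real.log_le_log (by positivity) (div_le_self hsx.le hql)
  refine (norm_sum_Ioc_neg_one_pow_mul_sum_divisors_le hD hχ hζ hs hs1 (by positivity)
    hAx).trans ?_
  rw [hquot, hqq]
  calc _ ≤ 3 * ‖s‖ * x ^ (-s.re) *
          (√x * (q * l) + q * q * (1 + l) * (√x / (q * l)) * (1 + Real.log x / 2)) := by gcongr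
    _ = 3 * ‖s‖ * q * (x ^ (-s.re) * √x) * (l + (1 + l⁻¹) * (1 + Real.log x / 2)) := by
        field
    _ = _ := by rw [Real.sqrt_eq_rpow, ← Real.rpow_add hx0, neg_add_eq_sub]

end TwistedSums

section DivisorWeightedSum

open Finset

lemma sum_Ioc_floor_card_divisors_mul_rpow_sub_one_le {p y : ℝ} (hp : 0 < p) (hp1 : p ≤ 1)
    (hy : 1 ≤ y) :
    ∑ n ∈ Ioc 0 ⌊y⌋₊, (n.divisors.card : ℝ) * (n : ℝ) ^ (p - 1) ≤
      y ^ p / p * (1 + Real.log y) := by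
  have hfloor : (⌊y⌋₊ : ℝ) ≤ y := Nat.floor_le (by linarith)
  have hpos : (0 : ℝ) < ⌊y⌋₊ := by exact_mod_cast Nat.floor_pos.2 hy
  refine (sum_Ioc_card_divisors_mul_rpow_sub_one_le hp hp1 _).trans ?_
  gcongr

lemma nine_halves_le_log_natCast {D : ℕ} (hD : 100 ≤ D) : 9 / 2 ≤ Real.log D := by
  have hexp : Real.exp 9 ≤ (D : ℝ) ^ 2 := by
    calc Real.exp 9 = Real.exp 1 ^ 9 := by rw [← Real.exp_nat_mul]; norm_num
      _ ≤ 2.72 ^ 9 := by gcongr; exact Real.exp_one_lt_d9.le.trans (by norm_num)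
      _ ≤ 100 ^ 2 := by norm_num
      _ ≤ (D : ℝ) ^ 2 := by gcongr; exact_mod_cast hD
  have hlog := (Real.le_log_iff_exp_le (by positivity)).2 hexp
  rw [Real.log_pow] at hlog
  push_cast at hlog
  linarith

lemma five_halves_le_log {y : ℝ} (hy : 27 / 2 ≤ y) : 5 / 2 ≤ Real.log y := by
  have hexp : Real.exp 5 ≤ y ^ 2 := by
    calc Real.exp 5 = Real.exp 1 ^ 5 := by rw [← Real.exp_nat_mul]; norm_num
      _ ≤ 2.72 ^ 5 := by gcongr; exact Real.exp_one_lt_d9.le.trans (by norm_num)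
      _ ≤ (27 / 2) ^ 2 := by norm_num
      _ ≤ y ^ 2 := by gcongr
  have hlog := (Real.le_log_iff_exp_le (by positivity)).2 hexp
  rw [Real.log_pow] at hlog
  push_cast at hlog
  linarith

lemma five_halves_le_log_mul {R : ℝ} (hR : 1 ≤ R) {D : ℕ} (hD : 100 ≤ D) :
    5 / 2 ≤ Real.log (R * (D : ℝ) ^ (1 / 4 : ℝ) * Real.log D) := by
  have hl := nine_halves_le_log_natCast hD
  have hq : (3 : ℝ) ≤ (D : ℝ) ^ (1 / 4 : ℝ) := by
    rw [one_div, Real.le_rpow_inv_iff_of_pos (by norm_num) D.cast_nonneg (by norm_num)]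
    exact le_trans (by norm_num) (Nat.ofNat_le_cast.2 hD)
  refine five_halves_le_log ?_
  calc (27 / 2 : ℝ) = 1 * 3 * (9 / 2) := by norm_num
    _ ≤ _ := by gcongr

lemma add_one_add_inv_mul_le {l L : ℝ} (hl : 9 / 2 ≤ l) (hL : 5 / 2 ≤ L) :
    l + (1 + l⁻¹) * (1 + 6 * L) ≤ 7 / 3 * l * L := by
  have hinv : l⁻¹ ≤ 2 / 9 := (inv_anti₀ (by norm_num) hl).trans_eq (by norm_num)
  calc l + (1 + l⁻¹) * (1 + 6 * L) ≤ l + (1 + 2 / 9) * (1 + 6 * L) := by gcongr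
    _ ≤ 7 / 3 * l * L := by nlinarith

lemma sum_Ioc_card_divisors_div_rpow_mul_le {σ K y : ℝ} (hK : 0 ≤ K) (hy : 1 ≤ y) {T : ℕ → ℝ}
    (hT : ∀ n : ℕ, 1 ≤ n → (n : ℝ) ≤ y → T n ≤ K * (y ^ 2 / n) ^ (1 / 2 - σ)) :
    ∑ n ∈ Ioc 0 ⌊y⌋₊, (n.divisors.card / (n : ℝ) ^ σ) * T n ≤
      2 * K * y ^ (3 / 2 - 2 * σ) * (1 + Real.log y) := by
  have hy0 : 0 < y := one_pos.trans_le hy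
  calc ∑ n ∈ Ioc 0 ⌊y⌋₊, (n.divisors.card / (n : ℝ) ^ σ) * T n
      ≤ ∑ n ∈ Ioc 0 ⌊y⌋₊,
          K * (y ^ 2) ^ (1 / 2 - σ) * (n.divisors.card * (n : ℝ) ^ ((1 / 2 : ℝ) - 1)) := by
        refine sum_le_sum fun n hn ↦ ?_
        obtain ⟨hn0, hny⟩ := mem_Ioc.1 hn
        have hnpos : (0 : ℝ) < n := by exact_mod_cast hn0
        have hpow : (n : ℝ) ^ σ * (n : ℝ) ^ (1 / 2 - σ) * (n : ℝ) ^ ((1 / 2 : ℝ) - 1) = 1 := by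
          rw [← Real.rpow_add hnpos, ← Real.rpow_add hnpos]
          norm_num
        calc (n.divisors.card / (n : ℝ) ^ σ) * T n
            ≤ (n.divisors.card / (n : ℝ) ^ σ) * (K * (y ^ 2 / n) ^ (1 / 2 - σ)) := by
              gcongr
              exact hT n hn0 ((Nat.le_floor_iff hy0.le).1 hny)
          _ = K * (y ^ 2) ^ (1 / 2 - σ) * (n.divisors.card * (n : ℝ) ^ ((1 / 2 : ℝ) - 1)) := by
              rw [Real.div_rpow (by positivity) hnpos.le, div_mul_eq_mul_div,
                div_eq_iff (by positivity), mul_div_assoc', mul_div_assoc',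
                div_eq_iff (by positivity)]
              linear_combination
                (-(n.divisors.card : ℝ) * K * (y ^ 2) ^ (1 / 2 - σ)) * hpow
    _ ≤ K * (y ^ 2) ^ (1 / 2 - σ) * (y ^ (1 / 2 : ℝ) / (1 / 2) * (1 + Real.log y)) := by
        rw [← mul_sum]
        gcongr
        exact sum_Ioc_floor_card_divisors_mul_rpow_sub_one_le one_half_pos (by norm_num) hy
    _ = 2 * K * (y ^ (2 * (1 / 2 - σ)) * y ^ (1 / 2 : ℝ)) * (1 + Real.log y) := by
        rw [Real.rpow_mul hy0.le, Real.rpow_two]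
        ring
    _ = 2 * K * y ^ (3 / 2 - 2 * σ) * (1 + Real.log y) := by
        rw [← Real.rpow_add hy0]
        ring_nf

lemma norm_sum_Ioc_neg_one_pow_mul_sum_divisors_le_mul_log {D : ℕ} (hD2 : 2 ∣ D) (hD : 100 ≤ D)
    {χ : DirichletCharacter ℂ D} (hχ : χ.IsPrimitive) {s : ℂ} (hζ : riemannZeta s = 0)
    (hs : 1 / 2 ≤ s.re) (hs1 : 1 ≤ ‖s‖) {U x : ℝ}
    (hU : U = ‖s‖ * (D : ℝ) ^ (1 / 4 : ℝ) * Real.log D) (hUx : U ^ 2 ≤ x) (hxU : x ≤ U ^ 12) :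
    ‖∑ r ∈ Ioc 0 ⌊x⌋₊, ((-1) ^ r * ∑ d ∈ r.divisors, χ d) * (r : ℂ) ^ (-s)‖ ≤
      7 * U * Real.log U * x ^ (1 / 2 - s.re) := by
  have hl := nine_halves_le_log_natCast hD
  have hL : 5 / 2 ≤ Real.log U := hU ▸ five_halves_le_log_mul hs1 hD
  have hU0 : 0 < U := by rw [hU]; positivity
  have hx0 : 0 < x := (pow_pos hU0 2).trans_le hUx
  have hsqrt : (D : ℝ) ^ (1 / 4 : ℝ) * Real.log D ≤ √x := by
    refine le_trans ?_ (Real.le_sqrt_of_sq_le hUx)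
    rw [hU, mul_assoc]
    exact le_mul_of_one_le_left (by positivity) hs1
  have hlogx : Real.log x / 2 ≤ 6 * Real.log U := by
    have := Real.log_le_log hx0 hxU
    rw [Real.log_pow] at this
    push_cast at this
    linarith
  refine (norm_sum_Ioc_neg_one_pow_mul_sum_divisors_le_sqrt hD2 (by lia) hχ hζ hs hs1
    hsqrt).trans ?_
  calc _ ≤ 3 * ‖s‖ * (D : ℝ) ^ (1 / 4 : ℝ) * x ^ (1 / 2 - s.re) *
          (Real.log D + (1 + (Real.log D)⁻¹) * (1 + 6 * Real.log U)) := by gcongr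
    _ ≤ 3 * ‖s‖ * (D : ℝ) ^ (1 / 4 : ℝ) * x ^ (1 / 2 - s.re) *
          (7 / 3 * Real.log D * Real.log U) := by
        gcongr
        exact add_one_add_inv_mul_le hl hL
    _ = 7 * (‖s‖ * (D : ℝ) ^ (1 / 4 : ℝ) * Real.log D) * Real.log U * x ^ (1 / 2 - s.re) := by
        ring
    _ = _ := by rw [← hU]

end DivisorWeightedSum

theorem stmt17_general {ρ : ℂ} (hzero : riemannZeta ρ = 0) (hρ : 1 / 2 ≤ ρ.re) (hρ1 : 1 ≤ ‖ρ‖)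
    {D : ℕ} (hD2 : 2 ∣ D) (hD : 100 ≤ D) {χ : DirichletCharacter ℂ D} (hχ : χ.IsPrimitive)
    {U : ℝ} (hU : U = ‖ρ‖ * (D : ℝ) ^ ((1 : ℝ) / 4) * Real.log D) :
    ∑ n ∈ Finset.Icc 1 ⌊U ^ 6⌋₊,
        (n.divisors.card / (n : ℝ) ^ ρ.re) *
          ‖∑ r ∈ Finset.Icc 1 ⌊U ^ 12 / n⌋₊,
              ((-1) ^ r * ∑ d ∈ r.divisors, χ d) / (r : ℂ) ^ ρ‖ <
      96 * U ^ (10 - 12 * ρ.re) * Real.log U ^ 2 := by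
  have hL : 5 / 2 ≤ Real.log U := hU ▸ five_halves_le_log_mul hρ1 hD
  have hU0 : 0 ≤ U := by rw [hU]; positivity
  have hU1 : 1 < U := (Real.log_pos_iff hU0).1 (by linarith)
  have hinner (n : ℕ) (hn : 1 ≤ n) (hnU : n ≤ U ^ 6) :
      ‖∑ r ∈ Finset.Icc 1 ⌊U ^ 12 / n⌋₊, ((-1) ^ r * ∑ d ∈ r.divisors, χ d) / (r : ℂ) ^ ρ‖ ≤
        7 * U * Real.log U * ((U ^ 6) ^ 2 / n) ^ (1 / 2 - ρ.re) := by
    simp only [div_eq_mul_inv _ ((_ : ℂ) ^ ρ), ← cpow_neg, ← pow_mul]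
    refine norm_sum_Ioc_neg_one_pow_mul_sum_divisors_le_mul_log hD2 hD hχ hzero hρ hρ1 hU ?_
      (div_le_self (by positivity) (Nat.one_le_cast.2 hn))
    calc U ^ 2 ≤ U ^ 6 := pow_le_pow_right₀ hU1.le (by norm_num)
      _ = U ^ 12 / U ^ 6 := by field
      _ ≤ U ^ 12 / n := by gcongr
  calc _ ≤ 2 * (7 * U * Real.log U) * (U ^ 6) ^ (3 / 2 - 2 * ρ.re) * (1 + Real.log (U ^ 6)) :=
        sum_Ioc_card_divisors_div_rpow_mul_le (by positivity) (one_le_pow₀ hU1.le) hinner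
    _ = 14 * U ^ (10 - 12 * ρ.re) * (Real.log U * (1 + 6 * Real.log U)) := by
        have hpow : U ^ (10 - 12 * ρ.re) = (U ^ 6) ^ (3 / 2 - 2 * ρ.re) * U := by
          rw [← Real.rpow_natCast_mul hU0, ← Real.rpow_add_one (by positivity)]
          ring_nf
        rw [hpow, Real.log_pow]
        push_cast
        ring
    _ < 96 * U ^ (10 - 12 * ρ.re) * Real.log U ^ 2 := by
        have hlog : 14 * (Real.log U * (1 + 6 * Real.log U)) < 96 * Real.log U ^ 2 := by nlinarith
        have hpos : 0 < U ^ (10 - 12 * ρ.re) := by positivity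
        linarith [mul_lt_mul_of_pos_left hlog hpos]

/-- The bound `Σ₁ < 96 U^{10-12β} (log U)²`: under the hypotheses of the main theorem
(a zero `ρ = β + iγ` of `ζ` with `β > 7/8`, `|ρ| > 10^{12}`, `γ log 2` away from multiples
of `2π`, `χ` real primitive mod `D ≡ 0 (mod 4)`, `D > 10^9`, `U = |ρ| D^{1/4} log D`),
`Σ_{n ≤ U^6} (τ(n)/n^β) |Σ_{r ≤ U^{12}/n} (-1)^r (1*χ)(r)/r^ρ| < 96 U^{10-12β} (log U)²`. -/
theorem stmt17 (β γ : ℝ) (ρ : ℂ) (hρ : ρ = β + γ * I)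
    (hzero : riemannZeta ρ = 0) (hβ : 7 / 8 < β) (hρbig : 10 ^ 12 < ‖ρ‖)
    (δ : ℝ) (hδ1 : -Real.pi < δ) (hδ2 : δ ≤ Real.pi)
    (hδ3 : ∃ n : ℤ, γ * Real.log 2 = 2 * Real.pi * n + δ)
    (hδ4 : Real.pi / 100 < |δ|)
    (D : ℕ) (χ : DirichletCharacter ℂ D)
    (hreal : ∀ n : ℕ, (χ n).im = 0) (hprim : χ.IsPrimitive)
    (hD4 : D % 4 = 0) (hD : 10 ^ 9 < D)
    (U : ℝ) (hU : U = ‖ρ‖ * (D : ℝ) ^ ((1 : ℝ) / 4) * Real.log D) :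
    ∑ n ∈ Finset.Icc 1 ⌊U ^ (6 : ℕ)⌋₊,
        ((n.divisors.card : ℝ) / (n : ℝ) ^ β) *
          ‖∑ r ∈ Finset.Icc 1 ⌊U ^ (12 : ℕ) / (n : ℝ)⌋₊,
              ((-1 : ℂ) ^ r * ∑ d ∈ r.divisors, χ d) / (r : ℂ) ^ ρ‖ <
      96 * U ^ (10 - 12 * β) * Real.log U ^ 2 := by
  have hre : ρ.re = β := by simp [hρ]
  exact hre ▸ stmt17_general hzero (by linarith) (by linarith) (by lia) (by lia) hprim hU
end
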